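/- arXiv:math/9905083 — 2 statements merged into one kernel-verified Lean document; each statement's English description precedes it below -/
import Mathlib

section
/- For all nonnegative integers n and l, the number f^O_{n,l} of fixed-point-free involutions of {1,…,2n} whose longest increasing subsequence has length at most l equals the 2n-th moment of the trace of a Haar-random l×l real orthogonal matrix: f^O_{n,l} = E_{U∈O(l)} (Tr(U))^{2n}. -/
open MeasureTheory Matrix

noncomputable section

/-- `lisLE π l` means the longest increasing subsequence of the permutation `π`
has length at most `l`. -/
def lisLE {N : ℕ} (π : Equiv.Perm (Fin N)) (l : ℕ) : Prop :=
  ∀ (k : ℕ) (f : Fin k → Fin N), StrictMono f → StrictMono (fun i => π (f i)) → k ≤ l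

/-- `f^O_{n,l}`: the number of fixed-point-free involutions of `{1,…,2n}` whose
longest increasing subsequence has length at most `l`. -/
def fpfInvCount (n l : ℕ) : ℕ :=
  Nat.card {π : Equiv.Perm (Fin (2 * n)) //
    π * π = 1 ∧ (∀ x, π x ≠ x) ∧ lisLE π l}

instance (l : ℕ) : MeasurableSpace (Matrix.orthogonalGroup (Fin l) ℝ) := borel _
instance (l : ℕ) : BorelSpace (Matrix.orthogonalGroup (Fin l) ℝ) := ⟨rfl⟩

/-!
The trace of `U ^⊗ ι` is `(tr U) ^ card ι`, and averaging a representation over a compact group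
projects onto the invariants, so the moment is the dimension of the space of `O(n)`-invariant
tensors. This space is spanned by the Brauer tensors of the pairings of `ι`: an invariant tensor
orthogonal to all of them has, by induction on `card ι`, vanishing contractions, and on a traceless
invariant tensor the quadratic form of the Casimir element of `𝔤𝔩(n)` is `card ι` times the squared
norm, yet at least twice that since every letter occurs an even number of times in a word of the
support.

If a pairing `π` increases along more than `card n` indices, antisymmetrizing its Brauer tensor over
the partners of these indices gives zero, which rewrites the tensor in terms of lexicographically
larger pairings; hence the pairings with increasing subsequences of length at most `card n` suffice.
For such a `π`, colour `x` by the length of a longest increasing subsequence ending at `x`. Paired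
letters receive the same colour because `π` is an involution, and `π` decreases on every colour
class, so among the pairings respecting this colouring `π` is the lexicographically largest. This
triangularity makes the remaining Brauer tensors linearly independent.
-/

/-- The `ι`-th tensor power `A^{⊗ι}` of a square matrix, with rows and columns indexed by the words
`ι → n`; multiplicativity in `A` is part of the bundling. -/
def kronPow (ι : Type*) {n R : Type*} [Fintype ι] [DecidableEq ι] [Fintype n] [DecidableEq n]
    [CommSemiring R] : Matrix n n R →* Matrix (ι → n) (ι → n) R where
  toFun A := Matrix.of fun v w => ∏ k, A (v k) (w k)
  map_one' := by
    ext v w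
    simp only [of_apply, one_apply, Finset.prod_ite_zero, Finset.prod_const_one, Finset.mem_univ,
      true_imp_iff, funext_iff]
  map_mul' A B := by
    ext v w
    simp only [of_apply, mul_apply, Finset.prod_univ_sum, Fintype.piFinset_univ,
      Finset.prod_mul_distrib]

section kronPow

variable {ι κ n R : Type*} [Fintype ι] [DecidableEq ι] [Fintype κ] [DecidableEq κ] [Fintype n]
  [DecidableEq n] [CommSemiring R]

lemma kronPow_apply (A : Matrix n n R) (v w : ι → n) :
    kronPow ι A v w = ∏ k, A (v k) (w k) := rfl

lemma kronPow_transpose (A : Matrix n n R) : kronPow ι Aᵀ = (kronPow ι A)ᵀ := rfl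

lemma trace_kronPow (A : Matrix n n R) : (kronPow ι A).trace = A.trace ^ Fintype.card ι := by
  simp only [trace, diag_apply, kronPow_apply]
  rw [← Finset.card_univ, ← Finset.prod_const, Finset.prod_univ_sum, Fintype.piFinset_univ]

lemma kronPow_diagonal (d : n → R) :
    kronPow ι (diagonal d) = diagonal fun w => ∏ k, d (w k) := by
  ext v w
  simp only [kronPow_apply, diagonal_apply, Finset.prod_ite_zero, Finset.mem_univ, true_imp_iff,
    funext_iff]

lemma kronPow_sumElim (A : Matrix n n R) (v w : ι → n) (a b : κ → n) :
    kronPow (ι ⊕ κ) A (Sum.elim v a) (Sum.elim w b) = kronPow ι A v w * kronPow κ A a b := by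
  simp only [kronPow_apply, Fintype.prod_sum_type, Sum.elim_inl, Sum.elim_inr]

lemma kronPow_mulVec_comp (e : ι ≃ κ) (A : Matrix n n R) (f : (ι → n) → R) (w : κ → n) :
    (kronPow κ A *ᵥ fun v => f (v ∘ e)) w = (kronPow ι A *ᵥ f) (w ∘ e) := by
  refine Fintype.sum_equiv (e.symm.arrowCongr (Equiv.refl n)) _ _ fun v => ?_
  simp only [kronPow_apply, ← e.prod_comp]
  rfl

end kronPow

/-- The action of the orthogonal group on tensors, written as functions on the words `ι → n`. -/
def tensorRep (ι n : Type*) [Fintype ι] [DecidableEq ι] [Fintype n] [DecidableEq n] :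
    Representation ℝ (orthogonalGroup n ℝ) ((ι → n) → ℝ) :=
  ((toLinAlgEquiv' : Matrix (ι → n) (ι → n) ℝ ≃ₐ[ℝ] _) : Matrix (ι → n) (ι → n) ℝ →* _).comp
    ((kronPow ι).comp (orthogonalGroup n ℝ).subtype)

section averaging

/-- The average of `ρ` is a projection onto the invariants, and the trace of a projection is its
rank. -/
lemma integral_trace_eq_finrank_invariants {𝕜 G V : Type*} [RCLike 𝕜] [Group G]
    [MeasurableSpace G] [MeasurableMul G] [NormedAddCommGroup V] [NormedSpace 𝕜 V]
    [NormedSpace ℝ V] [SMulCommClass ℝ 𝕜 V] [FiniteDimensional 𝕜 V]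
    (μ : Measure G) [μ.IsMulLeftInvariant] [IsProbabilityMeasure μ] (ρ : Representation 𝕜 G V)
    (hρ : ∀ v, Integrable (fun g => ρ g v) μ) :
    ∫ g, LinearMap.trace 𝕜 V (ρ g) ∂μ = Module.finrank 𝕜 ρ.invariants := by
  have : CompleteSpace V := FiniteDimensional.complete 𝕜 V
  let P : V →ₗ[𝕜] V :=
    { toFun := fun v => ∫ g, ρ g v ∂μ
      map_add' := fun v w => by simp only [map_add, integral_add (hρ v) (hρ w)]
      map_smul' := fun c v => by simp only [map_smul, integral_smul, RingHom.id_apply] }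
  have isProj_P : LinearMap.IsProj ρ.invariants P := by
    refine ⟨fun v h => ?_, fun v hv => ?_⟩
    · calc ρ h (∫ g, ρ g v ∂μ) = ∫ g, ρ (h * g) v ∂μ := by
            simp only [map_mul, Module.End.mul_apply]
            exact ((ρ h).toContinuousLinearMap.integral_comp_comm (hρ v)).symm
        _ = ∫ g, ρ g v ∂μ := integral_mul_left_eq_self (fun g => ρ g v) h
    · calc ∫ g, ρ g v ∂μ = ∫ _, v ∂μ := integral_congr_ae (.of_forall hv)
        _ = v := by simp
  rw [← isProj_P.trace]
  let b := Module.finBasis 𝕜 V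
  have trace_eq_sum (f : V →ₗ[𝕜] V) : LinearMap.trace 𝕜 V f = ∑ i, b.coord i (f (b i)) := by
    simp only [LinearMap.trace_eq_matrix_trace 𝕜 b, trace, diag_apply, LinearMap.toMatrix_apply,
      Module.Basis.coord_apply]
  have integrable_coord i : Integrable (fun g => b.coord i (ρ g (b i))) μ :=
    (b.coord i).toContinuousLinearMap.integrable_comp (hρ (b i))
  simp only [trace_eq_sum]
  rw [integral_finsetSum _ fun i _ => integrable_coord i]
  exact Finset.sum_congr rfl fun i _ =>
    (b.coord i).toContinuousLinearMap.integral_comp_comm (hρ (b i))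

variable {ι n : Type*} [Fintype ι] [DecidableEq ι] [Fintype n] [DecidableEq n]

lemma tensorRep_apply (U : orthogonalGroup n ℝ) (f : (ι → n) → ℝ) :
    tensorRep ι n U f = kronPow ι (U : Matrix n n ℝ) *ᵥ f := rfl

lemma trace_tensorRep (U : orthogonalGroup n ℝ) :
    LinearMap.trace ℝ _ (tensorRep ι n U) = (U : Matrix n n ℝ).trace ^ Fintype.card ι := by
  rw [← trace_kronPow]
  exact trace_toLin'_eq _

lemma norm_kronPow_apply_le_one (U : orthogonalGroup n ℝ) (v w : ι → n) :
    ‖kronPow ι (U : Matrix n n ℝ) v w‖ ≤ 1 := by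
  rw [kronPow_apply, norm_prod]
  exact Finset.prod_le_one (fun _ _ => norm_nonneg _) fun k _ =>
    entry_norm_bound_of_unitary (𝕜 := ℝ) U.2 _ _

lemma integrable_tensorRep [MeasurableSpace (orthogonalGroup n ℝ)]
    [BorelSpace (orthogonalGroup n ℝ)] (μ : Measure (orthogonalGroup n ℝ)) [IsFiniteMeasure μ]
    (f : (ι → n) → ℝ) : Integrable (fun U => tensorRep ι n U f) μ := by
  refine Integrable.of_eval fun w => ?_
  simp only [tensorRep_apply, mulVec, dotProduct]
  refine integrable_finsetSum _ fun v _ => Integrable.mul_const (.of_bound (C := 1) ?_ ?_) _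
  · simp only [kronPow_apply]
    exact (continuous_finsetProd _ fun k _ =>
      continuous_subtype_val.matrix_elem (w k) (v k)).aestronglyMeasurable
  · exact .of_forall fun U => norm_kronPow_apply_le_one U w v

lemma integral_trace_pow_eq_finrank_invariants [MeasurableSpace (orthogonalGroup n ℝ)]
    [BorelSpace (orthogonalGroup n ℝ)] (μ : Measure (orthogonalGroup n ℝ)) [μ.IsMulLeftInvariant]
    [IsProbabilityMeasure μ] (ι : Type*) [Fintype ι] [DecidableEq ι] :
    ∫ U : orthogonalGroup n ℝ, (U : Matrix n n ℝ).trace ^ Fintype.card ι ∂μ =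
      Module.finrank ℝ (tensorRep ι n).invariants := by
  simp only [← trace_tensorRep]
  exact integral_trace_eq_finrank_invariants μ _ (integrable_tensorRep μ)

end averaging

/-- The derivation action on tensors of the Lie algebra element `X`: it applies `X` to one tensor
factor at a time, and is the differential of `kronPow` at the identity. -/
def tensorDeriv {ι n R : Type*} [Fintype ι] [DecidableEq ι] [Fintype n] [CommSemiring R]
    (X : Matrix n n R) (f : (ι → n) → R) (w : ι → n) : R :=
  ∑ k, ∑ a, X (w k) a * f (Function.update w k a)

section tensorDeriv

variable {ι n R M 𝕜 : Type*} [Fintype ι] [DecidableEq ι] [Fintype n]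

lemma tensorDeriv_sub [CommRing R] (X Y : Matrix n n R) (f : (ι → n) → R) (w : ι → n) :
    tensorDeriv (X - Y) f w = tensorDeriv X f w - tensorDeriv Y f w := by
  simp only [tensorDeriv, Matrix.sub_apply, sub_mul, Finset.sum_sub_distrib]

lemma sum_eq_zero_of_forall_sum_update [AddCommMonoid M] {g : (ι → n) → M} (k : ι)
    (h : ∀ w, ∑ a, g (Function.update w k a) = 0) : ∑ w, g w = 0 := by
  rw [← (Equiv.funSplitAt k n).symm.sum_comp, Fintype.sum_prod_type_right]
  refine Finset.sum_eq_zero fun v _ => ?_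
  obtain hn | ⟨⟨a₀⟩⟩ := isEmpty_or_nonempty n
  · exact Fintype.sum_empty _
  rw [← h ((Equiv.funSplitAt k n).symm (a₀, v))]
  refine Finset.sum_congr rfl fun a _ => congrArg g (funext fun x => ?_)
  by_cases hx : x = k <;> simp [Equiv.funSplitAt, Equiv.piSplitAt, hx]

lemma sum_mul_update_eq_zero_of_traceless [CommSemiring R] {f : (ι → n) → R} {k r : ι}
    (hkr : k ≠ r)
    (htr : ∀ w, ∑ a, f (Function.update (Function.update w k a) r a) = 0) :
    ∑ w, f (Function.update w k (w r)) * f (Function.update w r (w k)) = 0 := by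
  refine sum_eq_zero_of_forall_sum_update k fun w => ?_
  simp only [Function.update_idem, Function.update_of_ne hkr.symm, Function.update_self]
  rw [← Finset.mul_sum, htr, mul_zero]

variable [DecidableEq n]

lemma tensorDeriv_single [CommSemiring R] (i j : n) (f : (ι → n) → R) (w : ι → n) :
    tensorDeriv (single i j 1) f w = ∑ k, if w k = i then f (Function.update w k j) else 0 := by
  simp only [tensorDeriv, single_apply, ite_and, ite_mul, one_mul, zero_mul, eq_comm (a := i)]
  simp only [Finset.sum_ite_irrel, Finset.sum_ite_eq, Finset.mem_univ, if_true,
    Finset.sum_const_zero]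

lemma tensorDeriv_single_self [CommSemiring R] (i : n) (f : (ι → n) → R) (w : ι → n) :
    tensorDeriv (single i i 1) f w = (Finset.univ.filter fun k => w k = i).card * f w := by
  rw [tensorDeriv_single, ← nsmul_eq_mul, ← Finset.sum_const, ← Finset.sum_filter]
  refine Finset.sum_congr rfl fun k hk => ?_
  rw [← (Finset.mem_filter.1 hk).2, Function.update_eq_self]

lemma sum_tensorDeriv_single_mul [CommSemiring R] (f : (ι → n) → R) (w : ι → n) :
    ∑ i, ∑ j, tensorDeriv (single i j 1) f w * tensorDeriv (single j i 1) f w =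
      ∑ k, ∑ r, f (Function.update w k (w r)) * f (Function.update w r (w k)) := by
  simp only [tensorDeriv_single, Finset.sum_mul_sum]
  rw [Finset.sum_congr rfl fun i _ => Finset.sum_comm, Finset.sum_comm]
  refine Finset.sum_congr rfl fun k _ => ?_
  rw [Finset.sum_congr rfl fun i _ => Finset.sum_comm, Finset.sum_comm]
  simp only [mul_ite, ite_mul, zero_mul, mul_zero, Finset.sum_ite_eq, Finset.mem_univ, if_true]

lemma sum_prod_erase_one_mul [CommSemiring R] (g : (ι → n) → R) (w : ι → n) (k : ι) :
    ∑ v, (∏ r ∈ Finset.univ.erase k, (1 : Matrix n n R) (w r) (v r)) * g v =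
      ∑ a, g (Function.update w k a) := by
  refine (Fintype.sum_of_injective (Function.update w k) (Function.update_injective w k) _ _
    (fun v hv => ?_) fun a => ?_).symm
  · obtain ⟨r, hrk, hr⟩ : ∃ r ≠ k, w r ≠ v r := by
      by_contra! h
      exact hv ⟨v k, Function.update_eq_iff.2 ⟨rfl, h⟩⟩
    have entry_eq_zero : (1 : Matrix n n R) (w r) (v r) = 0 := Matrix.one_apply_ne hr
    rw [Finset.prod_eq_zero (Finset.mem_erase.2 ⟨hrk, Finset.mem_univ r⟩) entry_eq_zero, zero_mul]
  · rw [Finset.prod_eq_one, one_mul]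
    intro r hr
    rw [Function.update_of_ne (Finset.ne_of_mem_erase hr), Matrix.one_apply_eq]

lemma hasDerivAt_kronPow_mulVec [NontriviallyNormedField 𝕜] {A : 𝕜 → Matrix n n 𝕜}
    {X : Matrix n n 𝕜} {t₀ : 𝕜} (hA₀ : A t₀ = 1)
    (hA : ∀ a b, HasDerivAt (fun t => A t a b) (X a b) t₀) (f : (ι → n) → 𝕜) (w : ι → n) :
    HasDerivAt (fun t => (kronPow ι (A t) *ᵥ f) w) (tensorDeriv X f w) t₀ := by
  refine (HasDerivAt.fun_sum fun v _ => (HasDerivAt.fun_finsetProd fun k _ =>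
    hA (w k) (v k)).mul_const (f v)).congr_deriv ?_
  simp only [hA₀, smul_eq_mul, Finset.sum_mul, mul_assoc]
  rw [Finset.sum_comm]
  simp only [sum_prod_erase_one_mul (fun v => X (w _) (v _) * f v), Function.update_self,
    tensorDeriv]

end tensorDeriv

section traceless

variable {ι n : Type*} [Fintype ι] [DecidableEq ι] [Fintype n] [DecidableEq n] {f : (ι → n) → ℝ}

open scoped Norms.L2Operator in
lemma tensorDeriv_eq_zero {X : Matrix n n ℝ} (hX : X ∈ skewAdjoint (Matrix n n ℝ))
    (hf : f ∈ (tensorRep ι n).invariants) (w : ι → n) : tensorDeriv X f w = 0 := by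
  let : NormedAlgebra ℚ (Matrix n n ℝ) := .restrictScalars ℚ ℝ _
  have hasDerivAt_exp : HasDerivAt (fun t : ℝ => NormedSpace.exp (t • X)) X 0 := by
    simpa only [zero_smul, NormedSpace.exp_zero, one_mul] using hasDerivAt_exp_smul_const X (0 : ℝ)
  have hasDerivAt_entry (a b : n) :
      HasDerivAt (fun t : ℝ => NormedSpace.exp (t • X) a b) (X a b) 0 :=
    hasDerivAt_pi.1 (hasDerivAt_pi.1 hasDerivAt_exp a) b
  have exp_zero : NormedSpace.exp ((0 : ℝ) • X) = 1 := by rw [zero_smul, NormedSpace.exp_zero]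
  have exp_mem (t : ℝ) : NormedSpace.exp (t • X) ∈ orthogonalGroup n ℝ :=
    NormedSpace.exp_mem_unitary_of_mem_skewAdjoint (skewAdjoint.smul_mem t hX)
  have h := hasDerivAt_kronPow_mulVec exp_zero hasDerivAt_entry f w
  refine h.unique ((hasDerivAt_const 0 (f w)).congr_of_eventuallyEq (.of_forall fun t => ?_))
  exact congrFun (hf ⟨_, exp_mem t⟩) w

lemma tensorDeriv_single_comm (hf : f ∈ (tensorRep ι n).invariants) (i j : n) (w : ι → n) :
    tensorDeriv (single i j 1) f w = tensorDeriv (single j i 1) f w := by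
  have skew : (single i j 1 - single j i 1 : Matrix n n ℝ) ∈ skewAdjoint (Matrix n n ℝ) := by
    simp only [skewAdjoint.mem_iff, star_eq_conjTranspose, conjTranspose_sub,
      conjTranspose_single, star_one, neg_sub]
  rw [← sub_eq_zero, ← tensorDeriv_sub, tensorDeriv_eq_zero skew hf]

/-- Invariance under the reflection that negates the coordinate `i`. -/
lemma even_card_of_invariant (hf : f ∈ (tensorRep ι n).invariants) {w : ι → n} (hw : f w ≠ 0)
    (i : n) : Even (Finset.univ.filter fun k => w k = i).card := by
  let d : n → ℝ := fun a => if a = i then -1 else 1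
  have mem : diagonal d ∈ orthogonalGroup n ℝ := by
    rw [mem_orthogonalGroup_iff, diagonal_transpose, diagonal_mul_diagonal, ← diagonal_one]
    congr 1 with a
    by_cases h : a = i <;> simp [d, h]
  have h : (∏ k, d (w k)) * f w = f w := by
    have hw := congrFun (hf ⟨_, mem⟩) w
    rwa [tensorRep_apply, kronPow_diagonal, mulVec_diagonal] at hw
  have prod_eq : ∏ k, d (w k) = (-1) ^ (Finset.univ.filter fun k => w k = i).card := by
    simp only [d, Finset.prod_ite, Finset.prod_const, one_pow, mul_one]
  rw [mul_eq_right₀ hw, prod_eq] at h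
  exact (neg_one_pow_eq_one_iff_even (by norm_num)).1 h

lemma two_mul_card_mul_sq_le (hf : f ∈ (tensorRep ι n).invariants) (w : ι → n) :
    2 * (Fintype.card ι * f w ^ 2) ≤ ∑ i, tensorDeriv (single i i 1) f w ^ 2 := by
  have sum_card : ∑ i, (Finset.univ.filter fun k => w k = i).card = Fintype.card ι :=
    (Finset.card_eq_sum_card_fiberwise fun _ _ => Finset.mem_univ _).symm
  rw [← sum_card, Nat.cast_sum, Finset.sum_mul, Finset.mul_sum]
  refine Finset.sum_le_sum fun i _ => ?_
  rw [tensorDeriv_single_self, mul_pow, ← mul_assoc]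
  by_cases hw : f w = 0
  · simp [hw]
  obtain ⟨c, hc⟩ := even_card_of_invariant hf hw i
  gcongr
  norm_cast
  rw [hc]
  nlinarith [Nat.le_mul_self c]

/-- The Casimir element `∑ E i j * E j i` acts on a traceless tensor through the identity of the
factors alone: the exchange of two different factors contributes a trace. -/
lemma sum_sq_tensorDeriv_of_traceless (hf : f ∈ (tensorRep ι n).invariants)
    (htr : ∀ k r, k ≠ r → ∀ w, ∑ a, f (Function.update (Function.update w k a) r a) = 0) :
    ∑ w, ∑ i, ∑ j, tensorDeriv (single i j 1) f w ^ 2 = Fintype.card ι * ∑ w, f w ^ 2 := by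
  calc ∑ w, ∑ i, ∑ j, tensorDeriv (single i j 1) f w ^ 2
      = ∑ w, ∑ k, ∑ r, f (Function.update w k (w r)) * f (Function.update w r (w k)) := by
        refine Finset.sum_congr rfl fun w _ => ?_
        rw [← sum_tensorDeriv_single_mul]
        simp only [sq, tensorDeriv_single_comm hf _ _ w]
    _ = ∑ k, ∑ r, ∑ w, f (Function.update w k (w r)) * f (Function.update w r (w k)) := by
        rw [Finset.sum_comm]
        exact Finset.sum_congr rfl fun k _ => Finset.sum_comm
    _ = ∑ k : ι, ∑ w, f w ^ 2 := by
        refine Finset.sum_congr rfl fun k _ => ?_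
        rw [Fintype.sum_eq_single k fun r hr =>
          sum_mul_update_eq_zero_of_traceless hr.symm (htr k r hr.symm)]
        simp only [Function.update_eq_self, sq]
    _ = Fintype.card ι * ∑ w, f w ^ 2 := by
        rw [Finset.sum_const, nsmul_eq_mul, Finset.card_univ]

lemma eq_zero_of_traceless [Nonempty ι] (hf : f ∈ (tensorRep ι n).invariants)
    (htr : ∀ k r, k ≠ r → ∀ w, ∑ a, f (Function.update (Function.update w k a) r a) = 0) :
    f = 0 := by
  have key : 2 * (Fintype.card ι * ∑ w, f w ^ 2) ≤ Fintype.card ι * ∑ w, f w ^ 2 :=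
    calc 2 * (Fintype.card ι * ∑ w, f w ^ 2)
        = ∑ w, 2 * (Fintype.card ι * f w ^ 2) := by simp only [Finset.mul_sum]
      _ ≤ ∑ w, ∑ i, tensorDeriv (single i i 1) f w ^ 2 :=
        Finset.sum_le_sum fun w _ => two_mul_card_mul_sq_le hf w
      _ ≤ ∑ w, ∑ i, ∑ j, tensorDeriv (single i j 1) f w ^ 2 :=
        Finset.sum_le_sum fun w _ => Finset.sum_le_sum fun i _ =>
          Finset.single_le_sum (f := fun j => tensorDeriv (single i j 1) f w ^ 2)
            (fun j _ => sq_nonneg _) (Finset.mem_univ i)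
      _ = Fintype.card ι * ∑ w, f w ^ 2 := sum_sq_tensorDeriv_of_traceless hf htr
  have card_pos : (0 : ℝ) < Fintype.card ι := by exact_mod_cast Fintype.card_pos
  have sum_sq_nonpos : ∑ w, f w ^ 2 ≤ 0 := by
    by_contra! h
    linarith [mul_pos card_pos h]
  ext w
  have h := Finset.single_le_sum (fun v _ => sq_nonneg (f v)) (Finset.mem_univ w)
  exact pow_eq_zero_iff two_ne_zero |>.1 (le_antisymm (h.trans sum_sq_nonpos) (sq_nonneg _))

end traceless

/-- The flattening of a tensor whose factors come in two groups into a matrix. -/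
def tensorFlatten {ι κ n R : Type*} (f : (ι ⊕ κ → n) → R) : Matrix (ι → n) (κ → n) R :=
  of fun v a => f (Sum.elim v a)

section flatten

variable {ι κ n R : Type*} [Fintype ι] [DecidableEq ι] [Fintype κ] [DecidableEq κ] [Fintype n]

lemma tensorFlatten_apply {ι κ n R : Type*} (f : (ι ⊕ κ → n) → R) (v : ι → n) (a : κ → n) :
    tensorFlatten f v a = f (Sum.elim v a) := rfl

lemma sum_sumElim [AddCommMonoid R] (f : (ι ⊕ κ → n) → R) :
    ∑ v, f v = ∑ w, ∑ a, tensorFlatten f w a := by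
  rw [← (Equiv.sumArrowEquivProdArrow ι κ n).symm.sum_comp, Fintype.sum_prod_type]
  rfl

variable [DecidableEq n]

lemma tensorFlatten_kronPow_mulVec [CommSemiring R] (A : Matrix n n R) (f : (ι ⊕ κ → n) → R) :
    tensorFlatten (kronPow (ι ⊕ κ) A *ᵥ f) =
      kronPow ι A * tensorFlatten f * (kronPow κ A)ᵀ := by
  ext v a
  simp only [tensorFlatten_apply, mulVec, dotProduct, mul_apply, transpose_apply,
    Finset.sum_mul]
  rw [sum_sumElim, Finset.sum_comm]
  refine Finset.sum_congr rfl fun b _ => Finset.sum_congr rfl fun w _ => ?_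
  rw [tensorFlatten_apply, kronPow_sumElim]
  ring

lemma kronPow_mul_transpose (U : orthogonalGroup n ℝ) :
    kronPow ι (U : Matrix n n ℝ) * (kronPow ι (U : Matrix n n ℝ))ᵀ = 1 := by
  rw [← kronPow_transpose, ← map_mul, (mem_orthogonalGroup_iff n ℝ).1 U.2, map_one]

lemma mem_invariants_of_tensorFlatten_eq_one {f : (ι ⊕ ι → n) → ℝ} (hf : tensorFlatten f = 1) :
    f ∈ (tensorRep (ι ⊕ ι) n).invariants := fun U => by
  have h : tensorFlatten (kronPow (ι ⊕ ι) (U : Matrix n n ℝ) *ᵥ f) = tensorFlatten f := by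
    rw [tensorFlatten_kronPow_mulVec, hf, mul_one, kronPow_mul_transpose]
  ext w
  rw [← Sum.elim_comp_inl_inr w]
  exact congrFun₂ h _ _

/-- The flattening of an invariant tensor is an intertwining operator. -/
lemma tensorFlatten_mulVec_mem_invariants {f : (ι ⊕ κ → n) → ℝ} {g : (κ → n) → ℝ}
    (hf : f ∈ (tensorRep (ι ⊕ κ) n).invariants) (hg : g ∈ (tensorRep κ n).invariants) :
    tensorFlatten f *ᵥ g ∈ (tensorRep ι n).invariants := fun U => by
  have flatten_eq := tensorFlatten_kronPow_mulVec (U : Matrix n n ℝ) f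
  rw [← tensorRep_apply, hf U] at flatten_eq
  have transpose_mulVec : (kronPow κ (U : Matrix n n ℝ))ᵀ *ᵥ g = g := by
    nth_rw 1 [← hg U]
    rw [tensorRep_apply, mulVec_mulVec, mul_eq_one_comm.1 (kronPow_mul_transpose U), one_mulVec]
  nth_rw 2 [flatten_eq]
  rw [tensorRep_apply, ← mulVec_mulVec, transpose_mulVec, mulVec_mulVec]

lemma comp_equiv_mem_invariants (e : ι ≃ κ) {f : (ι → n) → ℝ}
    (hf : f ∈ (tensorRep ι n).invariants) : (fun v => f (v ∘ e)) ∈ (tensorRep κ n).invariants :=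
  fun U => funext fun w => (kronPow_mulVec_comp e _ f w).trans (congrFun (hf U) (w ∘ e))

end flatten

/-- A fixed-point-free involution, i.e. a perfect matching of `ι`. -/
structure IsPairing {ι : Type*} (π : Equiv.Perm ι) : Prop where
  involutive : Function.Involutive π
  apply_ne : ∀ x, π x ≠ x

namespace IsPairing

variable {ι κ : Type*} {π : Equiv.Perm ι} {σ : Equiv.Perm κ}

lemma permCongr (hπ : IsPairing π) (e : ι ≃ κ) : IsPairing (e.permCongr π) where
  involutive x := by
    rw [Equiv.permCongr_apply, Equiv.permCongr_apply, e.symm_apply_apply, hπ.involutive,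
      e.apply_symm_apply]
  apply_ne x hx := hπ.apply_ne (e.symm x) (e.eq_symm_apply.2 hx)

lemma sumCongr (hπ : IsPairing π) (hσ : IsPairing σ) : IsPairing (π.sumCongr σ) where
  involutive := by
    rintro (x | x)
    · exact congrArg Sum.inl (hπ.involutive x)
    · exact congrArg Sum.inr (hσ.involutive x)
  apply_ne := by
    rintro (x | x) h
    · exact hπ.apply_ne x (Sum.inl_injective h)
    · exact hσ.apply_ne x (Sum.inr_injective h)

lemma boolNot : IsPairing Equiv.boolNot :=
  ⟨Bool.not_not, Bool.not_ne_self⟩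

/-- The index type `s` collects one element from each pair, the smaller one in some enumeration
of `ι`. -/
lemma exists_permCongr_sumComm [Finite ι] (hπ : IsPairing π) :
    ∃ (s : Set ι) (e : s ⊕ s ≃ ι), e.permCongr (Equiv.sumComm s s) = π := by
  let o := Finite.equivFin ι
  let s : Set ι := {x | o x < o (π x)}
  have bijective : Function.Bijective (Sum.elim (↑) (fun x => π x) : s ⊕ s → ι) := by
    refine ⟨Subtype.val_injective.sumElim (π.injective.comp Subtype.val_injective) ?_, fun x => ?_⟩
    · rintro ⟨x, hx⟩ ⟨y, hy⟩ rfl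
      rw [Set.mem_ofPred, hπ.involutive] at hx
      exact hx.asymm hy
    · obtain h | h := lt_or_gt_of_ne (o.injective.ne (hπ.apply_ne x))
      · exact ⟨.inr ⟨π x, by rwa [Set.mem_ofPred, hπ.involutive]⟩, hπ.involutive x⟩
      · exact ⟨.inl ⟨x, h⟩, rfl⟩
  refine ⟨s, Equiv.ofBijective _ bijective, Equiv.ext fun x => ?_⟩
  obtain ⟨y, rfl⟩ := (Equiv.ofBijective _ bijective).surjective x
  rw [Equiv.permCongr_apply, Equiv.symm_apply_apply]
  rcases y with y | y
  · rfl
  · exact (hπ.involutive y).symm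

end IsPairing

/-- The Brauer tensor of `π`: its coefficient at a word is `1` if paired letters agree and `0`
otherwise. -/
def pairingTensor {ι : Type*} [Fintype ι] (n : Type*) [DecidableEq n] (π : Equiv.Perm ι)
    (w : ι → n) : ℝ :=
  if w ∘ π = w then 1 else 0

section pairing

variable {ι κ n : Type*} [Fintype ι] [Fintype κ] [DecidableEq n]

lemma pairingTensor_permCongr (e : ι ≃ κ) (π : Equiv.Perm ι) (w : κ → n) :
    pairingTensor n (e.permCongr π) w = pairingTensor n π (w ∘ e) := by
  refine if_congr ?_ rfl rfl
  rw [← e.surjective.injective_comp_right.eq_iff]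
  simp only [funext_iff, Function.comp_apply, Equiv.permCongr_apply, Equiv.symm_apply_apply]

lemma tensorFlatten_pairingTensor_sumCongr (π : Equiv.Perm ι) (σ : Equiv.Perm κ) :
    tensorFlatten (pairingTensor n (π.sumCongr σ)) =
      vecMulVec (pairingTensor n π) (pairingTensor n σ) := by
  ext w a
  have comp_eq_iff : Sum.elim w a ∘ π.sumCongr σ = Sum.elim w a ↔ w ∘ π = w ∧ a ∘ σ = a := by
    simp only [funext_iff, Sum.forall]
    rfl
  simp only [tensorFlatten_apply, vecMulVec_apply, pairingTensor, comp_eq_iff, ite_and,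
    ite_mul, one_mul, zero_mul]

lemma tensorFlatten_mulVec_pairingTensor_boolNot {ι : Type*} [Fintype n]
    (f : (ι ⊕ Bool → n) → ℝ) (w : ι → n) :
    (tensorFlatten f *ᵥ pairingTensor n Equiv.boolNot) w = ∑ a, f (Sum.elim w fun _ => a) := by
  refine (Fintype.sum_of_injective (fun a _ => a) Function.const_injective _ _ (fun b hb => ?_)
    fun a => ?_).symm
  · refine mul_eq_zero_of_right _ (if_neg fun h => hb ⟨b true, funext fun x => ?_⟩)
    cases x
    exacts [congrFun h false, rfl]
  · exact (mul_one _).symm.trans (congrArg _ (if_pos rfl).symm)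

lemma tensorFlatten_pairingTensor_sumComm :
    tensorFlatten (pairingTensor n (Equiv.sumComm ι ι)) = 1 := by
  ext v a
  refine if_congr ?_ rfl rfl
  simp only [funext_iff, Sum.forall]
  exact ⟨fun h x => (h.1 x).symm, fun h => ⟨fun x => (h x).symm, h⟩⟩

variable [DecidableEq ι] [DecidableEq κ] [Fintype n]

lemma pairingTensor_mem_invariants {π : Equiv.Perm ι} (hπ : IsPairing π) :
    pairingTensor n π ∈ (tensorRep ι n).invariants := by
  classical
  obtain ⟨s, e, rfl⟩ := hπ.exists_permCongr_sumComm
  rw [funext (pairingTensor_permCongr e _)]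
  exact comp_equiv_mem_invariants e
    (mem_invariants_of_tensorFlatten_eq_one tensorFlatten_pairingTensor_sumComm)

lemma pairingTensor_permCongr_dotProduct (e : ι ≃ κ) (π : Equiv.Perm ι) (f : (κ → n) → ℝ) :
    pairingTensor n (e.permCongr π) ⬝ᵥ f = pairingTensor n π ⬝ᵥ fun v => f (v ∘ e.symm) := by
  refine Fintype.sum_equiv (e.symm.arrowCongr (Equiv.refl n)) _ _ fun v => ?_
  rw [pairingTensor_permCongr]
  congr 2
  ext x
  simp

lemma pairingTensor_sumCongr_dotProduct (π : Equiv.Perm ι) (σ : Equiv.Perm κ)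
    (f : (ι ⊕ κ → n) → ℝ) :
    pairingTensor n (π.sumCongr σ) ⬝ᵥ f =
      pairingTensor n π ⬝ᵥ (tensorFlatten f *ᵥ pairingTensor n σ) := by
  simp only [dotProduct, mulVec, Finset.mul_sum]
  rw [sum_sumElim]
  refine Finset.sum_congr rfl fun w _ => Finset.sum_congr rfl fun a _ => ?_
  have h := congrFun₂ (tensorFlatten_pairingTensor_sumCongr (n := n) π σ) w a
  rw [tensorFlatten_apply, vecMulVec_apply] at h
  rw [tensorFlatten_apply, tensorFlatten_apply, h, mul_assoc, mul_comm (pairingTensor n σ a)]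

end pairing

section firstFundamentalTheorem

lemma exists_sum_bool_equiv {ι : Type*} [DecidableEq ι] (n : Type*) {k r : ι} (hkr : k ≠ r) :
    ∃ e : {x // x ≠ k ∧ x ≠ r} ⊕ Bool ≃ ι, ∀ (w : ι → n) (a : n),
      Sum.elim (fun x => w x.1) (fun _ => a) ∘ e.symm =
        Function.update (Function.update w k a) r a := by
  have bijective : Function.Bijective
      (Sum.elim (↑) (Bool.rec r k) : {x // x ≠ k ∧ x ≠ r} ⊕ Bool → ι) := by
    refine ⟨Subtype.val_injective.sumElim ?_ ?_, fun x => ?_⟩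
    · rintro (_ | _) (_ | _) h
      exacts [rfl, (hkr h.symm).elim, (hkr h).elim, rfl]
    · rintro ⟨x, hxk, hxr⟩ (_ | _)
      exacts [hxr, hxk]
    · by_cases hxk : x = k
      · exact ⟨.inr true, hxk.symm⟩
      · by_cases hxr : x = r
        · exact ⟨.inr false, hxr.symm⟩
        · exact ⟨.inl ⟨x, hxk, hxr⟩, rfl⟩
  refine ⟨Equiv.ofBijective _ bijective, fun w a => ?_⟩
  rw [Equiv.comp_symm_eq]
  ext (⟨x, hxk, hxr⟩ | _ | _)
  · simp [hxk, hxr]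
  · simp
  · simp [hkr]

variable {ι κ n : Type*} [Fintype ι] [DecidableEq ι] [Fintype κ] [DecidableEq κ] [Fintype n]
  [DecidableEq n]

lemma pairingTensor_dotProduct_contraction_eq_zero {f : (ι → n) → ℝ}
    (horth : ∀ π : Equiv.Perm ι, IsPairing π → pairingTensor n π ⬝ᵥ f = 0) (e : κ ⊕ Bool ≃ ι)
    {π : Equiv.Perm κ} (hπ : IsPairing π) :
    pairingTensor n π ⬝ᵥ
      (tensorFlatten (fun v => f (v ∘ e.symm)) *ᵥ pairingTensor n Equiv.boolNot) = 0 := by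
  rw [← pairingTensor_sumCongr_dotProduct, ← pairingTensor_permCongr_dotProduct]
  exact horth _ ((hπ.sumCongr .boolNot).permCongr e)

lemma eq_zero_of_orthogonal_pairingTensor {f : (ι → n) → ℝ}
    (hf : f ∈ (tensorRep ι n).invariants)
    (horth : ∀ π : Equiv.Perm ι, IsPairing π → pairingTensor n π ⬝ᵥ f = 0) : f = 0 := by
  induction hm : Fintype.card ι using Nat.strong_induction_on generalizing ι with
  | _ m ih =>
  obtain hι | hι := isEmpty_or_nonempty ι
  · ext w
    have h := horth 1 ⟨fun _ => rfl, isEmptyElim⟩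
    rwa [dotProduct, Fintype.sum_unique, pairingTensor, if_pos (Subsingleton.elim _ _), one_mul,
      Subsingleton.elim default w] at h
  · refine eq_zero_of_traceless hf fun k r hkr w => ?_
    obtain ⟨e, he⟩ := exists_sum_bool_equiv n hkr
    have card_lt : Fintype.card {x // x ≠ k ∧ x ≠ r} < m :=
      hm ▸ Fintype.card_subtype_lt fun h => h.1 rfl
    have contraction_eq_zero :
        tensorFlatten (fun v => f (v ∘ e.symm)) *ᵥ pairingTensor n Equiv.boolNot = 0 :=
      ih _ card_lt
        (tensorFlatten_mulVec_mem_invariants (comp_equiv_mem_invariants e.symm hf)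
          (pairingTensor_mem_invariants .boolNot))
        (fun _ => pairingTensor_dotProduct_contraction_eq_zero horth e) rfl
    simpa only [tensorFlatten_mulVec_pairingTensor_boolNot, he, Pi.zero_apply] using
      congrFun contraction_eq_zero fun x => w x.1

lemma le_of_forall_orthogonal_eq_zero {α : Type*} [Fintype α] {S T : Submodule ℝ (α → ℝ)}
    (hST : S ≤ T) (h : ∀ f ∈ T, (∀ g ∈ S, g ⬝ᵥ f = 0) → f = 0) : T ≤ S := by
  let e := (WithLp.linearEquiv 2 ℝ (α → ℝ)).symm
  have inf_orthogonal : (S.map e.toLinearMap)ᗮ ⊓ T.map e.toLinearMap = ⊥ := by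
    refine (Submodule.eq_bot_iff _).2 ?_
    rintro _ ⟨horth, f, hf, rfl⟩
    have f_eq_zero : f = 0 := h f hf fun g hg => by
      have inner_eq_zero := horth (e g) ⟨g, hg, rfl⟩
      rwa [EuclideanSpace.inner_eq_star_dotProduct, star_trivial, dotProduct_comm] at inner_eq_zero
    rw [f_eq_zero, map_zero]
  have map_eq := Submodule.sup_orthogonal_inf_of_hasOrthogonalProjection
    (Submodule.map_mono (f := e.toLinearMap) hST)
  rw [inf_orthogonal, sup_bot_eq] at map_eq
  exact (Submodule.map_le_map_iff_of_injective e.injective T S).1 map_eq.ge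

/-- The first fundamental theorem of invariant theory for the orthogonal group. -/
theorem invariants_tensorRep_eq_span (ι n : Type*) [Fintype ι] [DecidableEq ι] [Fintype n]
    [DecidableEq n] : (tensorRep ι n).invariants =
      Submodule.span ℝ (pairingTensor n '' {π : Equiv.Perm ι | IsPairing π}) := by
  have span_le : Submodule.span ℝ (pairingTensor n '' {π : Equiv.Perm ι | IsPairing π}) ≤
      (tensorRep ι n).invariants :=
    Submodule.span_le.2 (Set.image_subset_iff.2 fun _ => pairingTensor_mem_invariants)
  refine le_antisymm (le_of_forall_orthogonal_eq_zero span_le fun f hf horth => ?_) span_le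
  exact eq_zero_of_orthogonal_pairingTensor hf fun π hπ =>
    horth _ (Submodule.subset_span ⟨π, hπ, rfl⟩)

end firstFundamentalTheorem

/-- Increasing subsequences of `π` have length at most `l`; such a subsequence is encoded by its set
of indices. -/
def IncreasingLE {ι : Type*} [Preorder ι] (π : Equiv.Perm ι) (l : ℕ) : Prop :=
  ∀ s : Finset ι, StrictMonoOn π s → s.card ≤ l

section straightening

variable {ι n : Type*} [Fintype n] {π τ : Equiv.Perm ι}

lemma sum_sign_smul_comp_ofSubtype_eq_zero {M : Type*} [AddCommGroup M] [DecidableEq ι]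
    {t : Finset ι} (ht : Fintype.card n < t.card) (F : (ι → n) → M) (w : ι → n) :
    ∑ σ : Equiv.Perm t, Equiv.Perm.sign σ • F (w ∘ Equiv.Perm.ofSubtype σ) = 0 := by
  obtain ⟨a, b, hab, hw⟩ := Fintype.exists_ne_map_eq_of_card_lt (fun a : t => w a)
    (by rwa [Fintype.card_coe])
  have comp_swap_mul (σ : Equiv.Perm t) :
      w ∘ Equiv.Perm.ofSubtype (Equiv.swap a b * σ) = w ∘ Equiv.Perm.ofSubtype σ := by
    ext x
    rw [map_mul, Equiv.Perm.ofSubtype_swap_eq]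
    exact Equiv.apply_swap_eq_self hw _
  refine Finset.sum_involution (fun σ _ => Equiv.swap a b * σ) (fun σ _ => ?_) (fun σ _ _ => ?_)
    (fun _ _ => Finset.mem_univ _) (fun σ _ => ?_)
  · rw [comp_swap_mul, Equiv.Perm.sign_mul, Equiv.Perm.sign_swap hab, neg_one_mul, Units.neg_smul,
      add_neg_cancel]
  · rwa [Ne, mul_eq_right, Equiv.swap_eq_one_iff]
  · rw [← mul_assoc, Equiv.swap_mul_self, one_mul]

variable [LinearOrder ι]

lemma IsPairing.apply_eq_of_moved (hπ : IsPairing π) {s : Set ι} (hs : StrictMonoOn π s)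
    (hτ : ∀ x, τ x ≠ x → π x ∈ s) {x : ι} (hx : τ x ≠ x) : τ (π x) = π x := by
  by_contra hπx
  have lt_iff_lt := hs.lt_iff_lt (hτ _ hπx) (hτ _ hx)
  rw [hπ.involutive, hπ.involutive] at lt_iff_lt
  obtain h | h := lt_or_gt_of_ne (hπ.apply_ne x)
  · exact h.asymm (lt_iff_lt.1 h)
  · exact h.asymm (lt_iff_lt.2 h)

lemma IsPairing.toLex_lt_toLex_permCongr [Finite ι] (hπ : IsPairing π) {s : Set ι}
    (hs : StrictMonoOn π s) (hτ : ∀ x, τ x ≠ x → π x ∈ s) (hne : τ ≠ 1) :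
    toLex ⇑π < toLex ⇑(τ.permCongr π) := by
  obtain ⟨m, hm, le_of_moved⟩ : ∃ m, τ m ≠ m ∧ ∀ x, τ x ≠ x → m ≤ x :=
    Set.exists_min_image {x | τ x ≠ x} id (Set.toFinite _) (not_forall.1 fun h => hne (Equiv.ext h))
  have fixed_of_lt {x : ι} (hx : x < m) : τ x = x := by
    by_contra h
    exact hx.not_ge (le_of_moved x h)
  have symm_apply_eq {x : ι} (hx : τ x = x) : τ.symm x = x := (τ.symm_apply_eq).2 hx.symm
  have at_partner : π (π m) < τ.permCongr π (π m) := by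
    rw [Equiv.permCongr_apply, symm_apply_eq (hπ.apply_eq_of_moved hs hτ hm), hπ.involutive]
    exact (le_of_moved _ (τ.injective.ne hm)).lt_of_ne hm.symm
  have at_min : π m < τ.permCongr π m := by
    have hm' : τ (τ.symm m) ≠ τ.symm m := fun h => hm (τ.symm.injective (by simpa using h))
    rw [Equiv.permCongr_apply, hπ.apply_eq_of_moved hs hτ hm']
    refine (hs.lt_iff_lt (hτ _ hm) (hτ _ hm')).1 ?_
    rw [hπ.involutive, hπ.involutive]
    exact (le_of_moved _ hm').lt_of_ne fun h => hm (τ.eq_symm_apply.1 h)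
  have eq_before {q : ι} (hqm : q < m) (hqπ : q < π m) : π q = τ.permCongr π q := by
    have partner_fixed : τ (π q) = π q := by
      by_contra h
      have lt_iff_lt := hs.lt_iff_lt (hτ _ h) (hτ _ hm)
      rw [hπ.involutive, hπ.involutive, hπ.involutive] at lt_iff_lt
      exact (le_of_moved _ h).not_gt (lt_iff_lt.2 hqπ)
    rw [Equiv.permCongr_apply, symm_apply_eq (fixed_of_lt hqm), partner_fixed]
  obtain h | h := le_total m (π m)
  · exact ⟨m, fun q hq => eq_before hq (hq.trans_le h), at_min⟩
  · exact ⟨π m, fun q hq => eq_before (hq.trans_le h) hq, at_partner⟩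

lemma pairingTensor_mem_span [Fintype ι] [DecidableEq n] (hπ : IsPairing π) :
    pairingTensor n π ∈ Submodule.span ℝ (pairingTensor n ''
      {π : Equiv.Perm ι | IsPairing π ∧ IncreasingLE π (Fintype.card n)}) := by
  induction π using
    (InvImage.wf (fun π : Equiv.Perm ι => toLex ⇑π) wellFounded_gt).induction with
  | _ π ih =>
  by_cases hle : IncreasingLE π (Fintype.card n)
  · exact Submodule.subset_span ⟨π, ⟨hπ, hle⟩, rfl⟩
  simp only [IncreasingLE, not_forall, not_le] at hle
  obtain ⟨s, hs, hcard⟩ := hle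
  let t := s.map π.toEmbedding
  have relation : ∑ σ : Equiv.Perm t, Equiv.Perm.sign σ •
      pairingTensor n ((Equiv.Perm.ofSubtype σ).permCongr π) = 0 := by
    ext w
    simp only [Finset.sum_apply, Pi.smul_apply, pairingTensor_permCongr]
    exact sum_sign_smul_comp_ofSubtype_eq_zero (by rwa [Finset.card_map]) _ w
  have one_permCongr : (Equiv.Perm.ofSubtype (1 : Equiv.Perm t)).permCongr π = π := by
    rw [map_one]
    rfl
  rw [← Finset.add_sum_erase _ _ (Finset.mem_univ 1), one_permCongr, Equiv.Perm.sign_one,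
    one_smul] at relation
  rw [eq_neg_of_add_eq_zero_left relation]
  refine Submodule.neg_mem _ (Submodule.sum_mem _ fun σ hσ => ?_)
  rw [Units.smul_def]
  refine zsmul_mem (ih _ (hπ.toLex_lt_toLex_permCongr hs (fun x hx => ?_) ?_) (hπ.permCongr _)) _
  · have mem_t : x ∈ t := by
      by_contra hxt
      exact hx (Equiv.Perm.ofSubtype_apply_of_not_mem σ hxt)
    obtain ⟨y, hy, rfl⟩ := Finset.mem_map.1 mem_t
    exact (hπ.involutive y).symm ▸ hy
  · exact fun h => Finset.ne_of_mem_erase hσ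
      (Equiv.Perm.ofSubtype_injective (h.trans (map_one Equiv.Perm.ofSubtype).symm))

end straightening

/-- The graph of `π` with the product order, so that its chains are the increasing subsequences
of `π`. -/
abbrev PermGraph {ι : Type*} (π : Equiv.Perm ι) : Type _ :=
  {p : ι × ι // π p.1 = p.2}

section colouring

variable {ι n : Type*} [LinearOrder ι] [Fintype n] {π : Equiv.Perm ι}

lemma PermGraph.lt_iff {p q : PermGraph π} : p < q ↔ p.1.1 < q.1.1 ∧ p.1.2 < q.1.2 := by
  refine ⟨fun h => ?_, fun h => Prod.lt_iff.2 (.inl ⟨h.1, h.2.le⟩)⟩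
  have fst_ne : p.1.1 ≠ q.1.1 := fun heq =>
    h.ne (Subtype.ext (Prod.ext heq (p.2.symm.trans ((congrArg π heq).trans q.2))))
  have snd_ne : p.1.2 ≠ q.1.2 := p.2 ▸ q.2 ▸ π.injective.ne fst_ne
  exact ⟨h.le.1.lt_of_ne fst_ne, h.le.2.lt_of_ne snd_ne⟩

lemma IncreasingLE.height_lt {l : ℕ} (hl : IncreasingLE π l) (p : PermGraph π) :
    Order.height p < l := by
  by_contra! hp
  obtain ⟨chain, -, rfl⟩ := Order.exists_series_of_le_height p hp
  have first_strictMono : StrictMono fun i => (chain i).1.1 := fun i j hij =>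
    (PermGraph.lt_iff.1 (chain.strictMono hij)).1
  let indices := Finset.univ.map ⟨_, first_strictMono.injective⟩
  have increasing : StrictMonoOn π indices := by
    intro x hx y hy hxy
    obtain ⟨i, -, rfl⟩ := Finset.mem_map.1 hx
    obtain ⟨j, -, rfl⟩ := Finset.mem_map.1 hy
    have snd_lt := (PermGraph.lt_iff.1 (chain.strictMono (first_strictMono.lt_iff_lt.1 hxy))).2
    rwa [← (chain i).2, ← (chain j).2] at snd_lt
  have card_le := hl indices increasing
  rw [Finset.card_map, Finset.card_univ, Fintype.card_fin] at card_le
  exact card_le.not_gt (Nat.lt_succ_self _)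

/-- The transposition of the graph of an involution. -/
def PermGraph.swap (hπ : Function.Involutive π) : PermGraph π ≃o PermGraph π where
  toFun p := ⟨p.1.swap, by rw [Prod.fst_swap, ← p.2, hπ, Prod.snd_swap]⟩
  invFun p := ⟨p.1.swap, by rw [Prod.fst_swap, ← p.2, hπ, Prod.snd_swap]⟩
  left_inv _ := rfl
  right_inv _ := rfl
  map_rel_iff' := Prod.swap_le_swap

lemma IncreasingLE.exists_word (hl : IncreasingLE π (Fintype.card n))
    (hπ : Function.Involutive π) :
    ∃ w : ι → n, w ∘ π = w ∧ ∀ a, StrictAntiOn π (w ⁻¹' {a}) := by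
  let point (x : ι) : PermGraph π := ⟨(x, π x), rfl⟩
  have exists_colour (x : ι) : ∃ c : Fin (Fintype.card n), Order.height (point x) = c := by
    obtain ⟨c, hc⟩ := ENat.ne_top_iff_exists.1 (hl.height_lt (point x)).ne_top
    exact ⟨⟨c, Nat.cast_lt.1 (hc ▸ hl.height_lt (point x))⟩, hc.symm⟩
  choose colour height_eq using exists_colour
  refine ⟨fun x => (Fintype.equivFin n).symm (colour x), funext fun x => ?_,
    fun a x hx y hy hxy => ?_⟩
  · have point_apply : point (π x) = PermGraph.swap hπ (point x) :=
      Subtype.ext (Prod.ext rfl (hπ x))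
    have height_apply : Order.height (point (π x)) = Order.height (point x) := by
      rw [point_apply, Order.height_orderIso]
    rw [height_eq, height_eq, Nat.cast_inj, Fin.val_inj] at height_apply
    exact congrArg _ height_apply
  · have colour_eq : colour x = colour y :=
      (Fintype.equivFin n).symm.injective (hx.trans hy.symm)
    refine (π.injective.ne hxy.ne').lt_or_gt.resolve_right fun h => ?_
    have point_lt : point x < point y := PermGraph.lt_iff.2 ⟨hxy, h⟩
    have height_lt := Order.height_strictMono point_lt (hl.height_lt _).lt_top
    rw [height_eq, height_eq, colour_eq] at height_lt
    exact height_lt.false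

end colouring

lemma linearIndependent_of_triangular {ι X R α : Type*} [Ring R] [NoZeroDivisors R] [Preorder α]
    {v : ι → X → R} (x : ι → X) (r : ι → α) (diag : ∀ i, v i (x i) ≠ 0)
    (triangular : ∀ i j, j ≠ i → v j (x i) ≠ 0 → r j < r i) : LinearIndependent R v := by
  rw [linearIndependent_iff']
  intro s c relation
  by_contra! h
  obtain ⟨i, ⟨hi, hci⟩, minimal⟩ :=
    (s.finite_toSet.subset (Set.sep_subset _ (c · ≠ 0))).exists_minimalFor r _ h
  have off_diag (j : ι) (hj : j ∈ s) (hji : j ≠ i) : c j * v j (x i) = 0 := by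
    by_contra hne
    have r_lt := triangular i j hji (right_ne_zero_of_mul hne)
    exact r_lt.not_ge (minimal ⟨hj, left_ne_zero_of_mul hne⟩ r_lt.le)
  have eval_relation := congrFun relation (x i)
  simp only [Finset.sum_apply, Pi.smul_apply, smul_eq_mul, Pi.zero_apply] at eval_relation
  rw [Finset.sum_eq_single_of_mem i hi off_diag] at eval_relation
  exact mul_ne_zero hci (diag i) eval_relation

section basis

variable {ι n : Type*} [Fintype ι] [LinearOrder ι] [DecidableEq n]

lemma toLex_le_of_pairingTensor_ne_zero {π ρ : Equiv.Perm ι} {w : ι → n}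
    (hwπ : w ∘ π = w) (hanti : ∀ a, StrictAntiOn π (w ⁻¹' {a}))
    (hρ : pairingTensor n ρ w ≠ 0) : toLex ⇑ρ ≤ toLex ⇑π := by
  have hwρ : w ∘ ρ = w := by
    by_contra h
    exact hρ (if_neg h)
  refine le_of_not_gt fun ⟨p, (agree : ∀ q < p, π q = ρ q), (hlt : π p < ρ p)⟩ => ?_
  obtain ⟨q, hq⟩ := π.surjective (ρ p)
  have same_colour : w q = w p :=
    (congrFun hwπ q).symm.trans ((congrArg w hq).trans (congrFun hwρ p))
  obtain h | rfl | h := lt_trichotomy q p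
  · exact h.ne (ρ.injective ((agree q h).symm.trans hq))
  · exact hlt.ne hq
  · have := hanti (w p) rfl same_colour h
    rw [hq] at this
    exact this.asymm hlt

variable [Fintype n]

lemma linearIndependent_pairingTensor :
    LinearIndependent ℝ
      fun π : {π : Equiv.Perm ι // IsPairing π ∧ IncreasingLE π (Fintype.card n)} =>
        pairingTensor n (π : Equiv.Perm ι) := by
  choose w hw hanti using
    fun π : {π : Equiv.Perm ι // IsPairing π ∧ IncreasingLE π (Fintype.card n)} =>
      π.2.2.exists_word (n := n) π.2.1.involutive
  refine linearIndependent_of_triangular w (fun π => toLex ⇑(π : Equiv.Perm ι))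
    (fun π => ?_) fun π ρ hne h => ?_
  · rw [pairingTensor, if_pos (hw π)]
    exact one_ne_zero
  · exact (toLex_le_of_pairingTensor_ne_zero (hw π) (hanti π) h).lt_of_ne
      fun heq => hne (Subtype.ext (DFunLike.coe_injective (toLex.injective heq)))

lemma finrank_invariants_tensorRep :
    Module.finrank ℝ (tensorRep ι n).invariants =
      Nat.card {π : Equiv.Perm ι // IsPairing π ∧ IncreasingLE π (Fintype.card n)} := by
  have invariants_eq_span : (tensorRep ι n).invariants = Submodule.span ℝ (Set.range
      fun π : {π : Equiv.Perm ι // IsPairing π ∧ IncreasingLE π (Fintype.card n)} =>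
        pairingTensor n (π : Equiv.Perm ι)) := by
    rw [invariants_tensorRep_eq_span]
    refine Eq.trans ?_ (congrArg _ (Set.image_eq_range (pairingTensor n)
      {π : Equiv.Perm ι | IsPairing π ∧ IncreasingLE π (Fintype.card n)}))
    refine (Submodule.span_le.2 ?_).antisymm (Submodule.span_mono (Set.image_mono fun _ h => h.1))
    rintro _ ⟨π, hπ, rfl⟩
    exact pairingTensor_mem_span hπ
  have := Fintype.ofFinite
    {π : Equiv.Perm ι // IsPairing π ∧ IncreasingLE π (Fintype.card n)}
  rw [invariants_eq_span, finrank_span_eq_card linearIndependent_pairingTensor,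
    Nat.card_eq_fintype_card]

end basis

theorem fpfInvCount_eq_orthogonal_trace_moment_general {ι n : Type*} [Fintype ι] [LinearOrder ι]
    [Fintype n] [DecidableEq n] [MeasurableSpace (orthogonalGroup n ℝ)]
    [BorelSpace (orthogonalGroup n ℝ)] (μ : Measure (orthogonalGroup n ℝ))
    [μ.IsMulLeftInvariant] [IsProbabilityMeasure μ] :
    (Nat.card {π : Equiv.Perm ι // IsPairing π ∧ IncreasingLE π (Fintype.card n)} : ℝ) =
      ∫ U, (U : Matrix n n ℝ).trace ^ Fintype.card ι ∂μ := by
  rw [integral_trace_pow_eq_finrank_invariants, finrank_invariants_tensorRep]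

lemma lisLE_iff_increasingLE {N l : ℕ} {π : Equiv.Perm (Fin N)} :
    lisLE π l ↔ IncreasingLE π l := by
  refine ⟨fun h s hs => ?_, fun h k f hf hπf => ?_⟩
  · exact h s.card (s.orderEmbOfFin rfl) (s.orderEmbOfFin rfl).strictMono fun i j hij =>
      hs (s.orderEmbOfFin_mem rfl i) (s.orderEmbOfFin_mem rfl j)
        ((s.orderEmbOfFin rfl).strictMono hij)
  · have increasing : StrictMonoOn π (Finset.univ.map ⟨f, hf.injective⟩ : Finset (Fin N)) := by
      simp only [Finset.coe_map, Finset.coe_univ, Set.image_univ]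
      rintro _ ⟨i, rfl⟩ _ ⟨j, rfl⟩ hij
      exact hπf (hf.lt_iff_lt.1 hij)
    have card_le := h _ increasing
    rwa [Finset.card_map, Finset.card_univ, Fintype.card_fin] at card_le

lemma fpfInvCount_eq_card (n l : ℕ) :
    fpfInvCount n l =
      Nat.card {π : Equiv.Perm (Fin (2 * n)) // IsPairing π ∧ IncreasingLE π l} := by
  refine Nat.card_congr (Equiv.subtypeEquivRight fun π => ?_)
  have mul_self_iff : π * π = 1 ↔ Function.Involutive π := Equiv.ext_iff
  rw [← lisLE_iff_increasingLE, ← and_assoc, mul_self_iff]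
  exact and_congr_left fun _ => ⟨fun h => ⟨h.1, h.2⟩, fun h => ⟨h.1, h.2⟩⟩

/-- `f^O_{n,l} = E_{U ∈ O(l)} (Tr U)^{2n}`, where the expectation is taken with respect to
the (unique) Haar probability measure on the orthogonal group `O(l)`. -/
theorem fpfInvCount_eq_orthogonal_trace_moment (n l : ℕ)
    (μ : Measure (Matrix.orthogonalGroup (Fin l) ℝ))
    [μ.IsHaarMeasure] [IsProbabilityMeasure μ] :
    (fpfInvCount n l : ℝ) =
      ∫ U, (Matrix.trace (U : Matrix (Fin l) (Fin l) ℝ)) ^ (2 * n) ∂μ := by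
  rw [fpfInvCount_eq_card]
  simpa only [Fintype.card_fin] using
    fpfInvCount_eq_orthogonal_trace_moment_general (ι := Fin (2 * n)) μ
end
end

section
/- For all nonnegative integers n and l, the number f^u_{n,2l} of permutations π of {1,…,4n} satisfying π = π⁻¹ and π = ι∘π⁻¹∘ι, with π(x) ≠ x and π(x) ≠ ι(x) for all x, and having longest increasing subsequence of length at most 2l, equals E_{U∈U(l)} (Tr(U) + conj(Tr(U)))^{2n}, i.e. the 2n-th moment of twice the real part of the trace of a Haar-random l×l unitary matrix. -/
open MeasureTheory Matrix

noncomputable section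

/-- `f^u_{n,l}`: the number of permutations `π` of `{1,…,4n}` with `π = π⁻¹`,
`π = ι∘π⁻¹∘ι` (where `ι(x) = 4n+1-x`), `π(x) ≠ x` and `π(x) ≠ ι(x)` for all `x`,
whose longest increasing subsequence has length at most `l`. -/
def fuCount (n l : ℕ) : ℕ :=
  Nat.card {π : Equiv.Perm (Fin (4 * n)) //
    π = π⁻¹ ∧ π = Fin.revPerm * π⁻¹ * Fin.revPerm ∧
    (∀ x, π x ≠ x) ∧ (∀ x, π x ≠ Fin.revPerm x) ∧ lisLE π l}

instance (l : ℕ) : MeasurableSpace (Matrix.unitaryGroup (Fin l) ℂ) := borel _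
instance (l : ℕ) : BorelSpace (Matrix.unitaryGroup (Fin l) ℂ) := ⟨rfl⟩

/-!
Write `dbl U` for `U` acting on `ℂ^l ⊕ conj ℂ^l`, so that `tr (dbl U) = Tr U + conj (Tr U)`. The
integral of `(tr (dbl U)) ^ (2 n)` is the dimension of the space of `U(l)`-invariants in the
`2n`-th tensor power of this representation, and the theorem follows from a basis of the
invariants that is indexed by the permutations being counted.

The representation carries an invariant symplectic form, and the sign change `signFlip` on one of
the two summands commutes with the group and negates the form. A permutation `π` with the two
symmetries and without the two kinds of fixed points is the same as a perfect matching `M = ι ∘ π`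
of `4n` points on a line that is symmetric under reflection. Put the `2n` tensor factors on the
left half of the line and their sign-flipped copies on the right half: pairing the vectors along
the edges, with one edge from each mirror pair, gives an invariant tensor.

* These tensors span. The commutant of `GL(l)` on a tensor power is spanned by permutations, hence
  every `U(l)`-invariant is a combination of complete contractions between `ℂ^l` and its
  conjugate, and each of these is a combination of symmetric matchings by averaging over sign
  flips.
* An increasing subsequence of `π` longer than `2l` yields a nest of more than `l` edges of `M`.
  Antisymmetrizing over the endpoints of these edges gives zero, because there are more than `2l`
  of them in a space of dimension `2l`; this rewrites `M` in terms of lexicographically smaller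
  matchings, so the matchings whose `π` has no such subsequence still span.
* The remaining ones are independent. Label each edge by its depth, the number of edges nested
  around it, and put dual basis vectors with that label at its two ends. Evaluated at these
  vectors, the matchings form a triangular system with respect to the lexicographic order.
-/

/-- A fixed-point-free involution of `Fin N` that commutes with the reversal and joins no point to
its mirror image. These are the permutations `ι ∘ π` for the `π` counted by `fuCount`; they are read
as perfect matchings whose edges `{x, M x}` are permuted by the reversal. -/
structure IsSymMatching {N : ℕ} (M : Equiv.Perm (Fin N)) : Prop where
  involutive : Function.Involutive M
  apply_rev : ∀ x, M x.rev = (M x).rev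
  ne_self : ∀ x, M x ≠ x
  ne_rev : ∀ x, M x ≠ x.rev

/-- `Fin N` ordered by nesting: `x < y` when `x` lies to the left of `y` and `M x` lies to the right
of `M y`. Its chains are the decreasing subsequences of `M`. -/
def NestOrder {N : ℕ} (_ : Equiv.Perm (Fin N)) : Type := Fin N

namespace NestOrder

variable {N : ℕ} {M : Equiv.Perm (Fin N)}

/-- The identification of the points with the elements of the nesting order. -/
def of (M : Equiv.Perm (Fin N)) : Fin N ≃ NestOrder M := Equiv.refl _

instance : PartialOrder (NestOrder M) :=
  PartialOrder.lift (fun x => ((of M).symm x, OrderDual.toDual (M ((of M).symm x))))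
    fun _ _ h => (of M).symm.injective (congrArg Prod.fst h)

theorem of_le_of {x y : Fin N} : of M x ≤ of M y ↔ x ≤ y ∧ M y ≤ M x := Iff.rfl

theorem of_lt_of {x y : Fin N} : of M x < of M y ↔ x < y ∧ M y < M x := by
  rw [lt_iff_le_and_ne, of_le_of, (of M).injective.ne_iff]
  constructor
  · rintro ⟨⟨hxy, hM⟩, hne⟩
    exact ⟨hxy.lt_of_ne hne, hM.lt_of_ne (M.injective.ne hne.symm)⟩
  · rintro ⟨hxy, hM⟩
    exact ⟨⟨hxy.le, hM.le⟩, hxy.ne⟩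

/-- Reflecting the diagram of the matching maps nested edges to nested edges. -/
def revIso (hM : IsSymMatching M) : NestOrder M ≃o NestOrder M where
  toEquiv := ((of M).symm.trans (M.trans Fin.revPerm)).trans (of M)
  map_rel_iff' {a b} := by
    obtain ⟨x, rfl⟩ := (of M).surjective a
    obtain ⟨y, rfl⟩ := (of M).surjective b
    simp [of_le_of, hM.apply_rev, hM.involutive _, and_comm]

/-- Exchanging the endpoints of the edges reverses the nesting order. -/
def swapIso (hM : IsSymMatching M) : NestOrder M ≃o (NestOrder M)ᵒᵈ where
  toEquiv := ((of M).symm.trans M).trans ((of M).trans OrderDual.toDual)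
  map_rel_iff' {a b} := by
    obtain ⟨x, rfl⟩ := (of M).surjective a
    obtain ⟨y, rfl⟩ := (of M).surjective b
    simp [of_le_of, hM.involutive _, and_comm]

theorem krullDim_lt_of_lisLE {L : ℕ} (h : lisLE (Fin.revPerm * M) L) :
    Order.krullDim (NestOrder M) < L := by
  refine Order.krullDim_lt_coe_iff.2 fun p => h (p.length + 1) (fun i => (of M).symm (p i)) ?_ ?_
  · exact fun i j hij => (of_lt_of.1 (p.strictMono hij)).1
  · exact fun i j hij => Fin.rev_lt_rev.2 (of_lt_of.1 (p.strictMono hij)).2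

end NestOrder

section Depth

open NestOrder

variable {N : ℕ} {M : Equiv.Perm (Fin N)}

/-- The greatest length of a chain in the nesting order that ends at `x`. For a left endpoint `x`,
this is the number of edges in a longest nest around the edge at `x`. -/
def depth (M : Equiv.Perm (Fin N)) (x : Fin N) : ℕ := (Order.height (of M x)).toNat

theorem natCast_depth (M : Equiv.Perm (Fin N)) (x : Fin N) :
    (depth M x : ℕ∞) = Order.height (of M x) := by
  refine ENat.natCast_toNat (ne_top_of_le_ne_top (ENat.natCast_ne_top x) ?_)
  rw [← Order.height_nat]
  exact Order.height_le_height_apply_of_strictMono (fun y => ((of M).symm y : ℕ))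
    (fun a b h => (of_lt_of.1 h).1) (of M x)

theorem depth_lt_depth {x y : Fin N} (hxy : x < y) (hM : M y < M x) : depth M x < depth M y := by
  have h := Order.height_strictMono (of_lt_of.2 ⟨hxy, hM⟩)
    (by rw [← natCast_depth]; exact ENat.natCast_lt_top _)
  rwa [← natCast_depth, ← natCast_depth, Nat.cast_lt] at h

theorem depth_rev_apply (hM : IsSymMatching M) (x : Fin N) : depth M (M x).rev = depth M x :=
  congrArg ENat.toNat (Order.height_orderIso (revIso hM) (of M x))

theorem depth_lt_of_lisLE (hM : IsSymMatching M) {l : ℕ} (hl : lisLE (Fin.revPerm * M) (2 * l))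
    {x : Fin N} (hx : x < M x) : depth M x < l := by
  have hlt : depth M x < depth M (M x) := depth_lt_depth hx (by rwa [hM.involutive])
  have hcoheight : Order.coheight (of M (M x)) = depth M x :=
    (Order.height_orderIso (swapIso hM) (of M x)).trans (natCast_depth M x).symm
  have hdim := krullDim_lt_of_lisLE hl
  have : Nonempty (NestOrder M) := ⟨of M x⟩
  rw [Order.krullDim_eq_iSup_height_add_coheight_of_nonempty] at hdim
  have hle := le_iSup (fun a : NestOrder M => Order.height a + Order.coheight a) (of M (M x))
  have hsum : depth M (M x) + depth M x < 2 * l := by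
    rw [hcoheight, ← natCast_depth] at hle
    exact_mod_cast hle.trans_lt (WithBot.coe_lt_coe.1 hdim)
  omega

/-- The depth of the left endpoint of the edge at `x`. -/
def edgeDepth (M : Equiv.Perm (Fin N)) (x : Fin N) : ℕ := depth M (min x (M x))

theorem edgeDepth_apply (hM : IsSymMatching M) (x : Fin N) : edgeDepth M (M x) = edgeDepth M x := by
  rw [edgeDepth, edgeDepth, hM.involutive, min_comm]

theorem edgeDepth_rev (hM : IsSymMatching M) (x : Fin N) : edgeDepth M x.rev = edgeDepth M x := by
  have h := depth_rev_apply hM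
  rcases (hM.ne_self x).lt_or_gt with hx | hx
  · rw [edgeDepth, edgeDepth, hM.apply_rev, min_eq_left (Fin.rev_le_rev.2 hx.le),
      min_eq_right hx.le, ← h (M x), hM.involutive]
  · rw [edgeDepth, edgeDepth, hM.apply_rev, min_eq_right (Fin.rev_le_rev.2 hx.le),
      min_eq_left hx.le, h x]

theorem edgeDepth_lt_of_lisLE (hM : IsSymMatching M) {l : ℕ}
    (hl : lisLE (Fin.revPerm * M) (2 * l)) (x : Fin N) : edgeDepth M x < l := by
  rcases (hM.ne_self x).lt_or_gt with hx | hx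
  · rw [edgeDepth, min_eq_right hx.le]
    exact depth_lt_of_lisLE hM hl (by rwa [hM.involutive])
  · rw [edgeDepth, min_eq_left hx.le]
    exact depth_lt_of_lisLE hM hl hx

end Depth

section Orbits

variable {N : ℕ} {M : Equiv.Perm (Fin N)}

/-- The smallest element of the orbit of `x` under the matching `M` and the reversal. -/
def orbMin (M : Equiv.Perm (Fin N)) (x : Fin N) : Fin N :=
  min (min x (M x)) (min x.rev (M x).rev)

theorem orbMin_mem (M : Equiv.Perm (Fin N)) (x : Fin N) :
    orbMin M x = x ∨ orbMin M x = M x ∨ orbMin M x = x.rev ∨ orbMin M x = (M x).rev := by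
  unfold orbMin
  grind

theorem orbMin_apply (hM : IsSymMatching M) (x : Fin N) : orbMin M (M x) = orbMin M x := by
  simp only [orbMin, hM.involutive x, min_comm]

theorem orbMin_rev (hM : IsSymMatching M) (x : Fin N) : orbMin M x.rev = orbMin M x := by
  simp only [orbMin, hM.apply_rev, Fin.rev_rev, min_comm]

theorem orbMin_orbMin (hM : IsSymMatching M) (x : Fin N) :
    orbMin M (orbMin M x) = orbMin M x := by
  rcases orbMin_mem M x with h | h | h | h
  · rw [h, h]
  · conv_lhs => rw [h, orbMin_apply hM]
  · conv_lhs => rw [h, orbMin_rev hM]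
  · conv_lhs => rw [h, orbMin_rev hM, orbMin_apply hM]

theorem orbMin_eq_orbMin_iff (hM : IsSymMatching M) {x y : Fin N} :
    orbMin M x = orbMin M y ↔ x = y ∨ x = M y ∨ x = y.rev ∨ x = (M y).rev := by
  constructor
  · intro h
    have hM₁ : ∀ z, M (M z) = z := hM.involutive
    have hM₂ := hM.apply_rev
    rcases orbMin_mem M x with hx | hx | hx | hx <;>
      rcases orbMin_mem M y with hy | hy | hy | hy <;>
        grind [Fin.rev_rev]
  · rintro (rfl | rfl | rfl | rfl) <;> simp only [orbMin_apply hM, orbMin_rev hM]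

/-- Representatives of the orbits under the matching `M` and the reversal. -/
def orbReps (M : Equiv.Perm (Fin N)) : Finset (Fin N) :=
  Finset.univ.filter fun x => orbMin M x = x

theorem mem_orbReps {x : Fin N} : x ∈ orbReps M ↔ orbMin M x = x := by simp [orbReps]

theorem orbMin_mem_orbReps (hM : IsSymMatching M) (x : Fin N) : orbMin M x ∈ orbReps M :=
  mem_orbReps.2 (orbMin_orbMin hM x)

theorem IsSymMatching.conj (hM : IsSymMatching M) {θ : Equiv.Perm (Fin N)}
    (hθ : ∀ x, θ x.rev = (θ x).rev) : IsSymMatching (θ * M * θ⁻¹) := by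
  have hθ' : ∀ x, θ.symm x.rev = (θ.symm x).rev := fun x => by
    rw [Equiv.symm_apply_eq, hθ, Equiv.apply_symm_apply]
  refine ⟨fun x => ?_, fun x => ?_, fun x h => ?_, fun x h => ?_⟩
  · simp [hM.involutive _]
  · simp [hθ', hM.apply_rev, hθ]
  · exact hM.ne_self (θ.symm x) ((Equiv.eq_symm_apply θ).2 h)
  · exact hM.ne_rev (θ.symm x) (by rw [← hθ']; exact (Equiv.eq_symm_apply θ).2 h)

theorem orbMin_conj_eq_iff (hM : IsSymMatching M) {θ : Equiv.Perm (Fin N)}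
    (hθ : ∀ x, θ x.rev = (θ x).rev) {x y : Fin N} :
    orbMin (θ * M * θ⁻¹) (θ x) = orbMin (θ * M * θ⁻¹) (θ y) ↔ orbMin M x = orbMin M y := by
  rw [orbMin_eq_orbMin_iff hM, orbMin_eq_orbMin_iff (hM.conj hθ)]
  simp [← hθ]

end Orbits

section Mirrored

variable {N : ℕ} {V : Type*} {J : V → V}

/-- Families of vectors indexed by `Fin N` on which the reversal acts by `J`. -/
def IsMirrored (J : V → V) (w : Fin N → V) : Prop := ∀ x, w x.rev = J (w x)

theorem IsMirrored.comp {w : Fin N → V} (hw : IsMirrored J w) {θ : Fin N → Fin N}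
    (hθ : ∀ x, θ x.rev = (θ x).rev) : IsMirrored J (w ∘ θ) := fun x => by
  rw [Function.comp_apply, hθ, hw, Function.comp_apply]

end Mirrored

section MatchProd

variable {N : ℕ} {M : Equiv.Perm (Fin N)} {R V : Type*} [CommRing R] [AddCommGroup V] [Module R V]
  {B : V →ₗ[R] V →ₗ[R] R} {J : V → V}

/-- The product of the pairings of the vectors at the two ends of the edges of `M`, with one edge
taken from every pair of mirror edges. -/
def matchProd (B : V →ₗ[R] V →ₗ[R] R) (M : Equiv.Perm (Fin N)) (w : Fin N → V) : R :=
  ∏ x ∈ orbReps M, B (w x) (w (M x))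

theorem exists_pairing_eq_smul_orbMin (hM : IsSymMatching M) (hB : B.IsAlt)
    (hJ : ∀ u v, B (J u) (J v) = B v u) (x : Fin N) :
    ∃ ε : ℤˣ, ∀ w : Fin N → V, IsMirrored J w →
      B (w x) (w (M x)) = ε • B (w (orbMin M x)) (w (M (orbMin M x))) := by
  have hmirror : ∀ w : Fin N → V, IsMirrored J w →
      B (w x.rev) (w (M x.rev)) = B (w (M x)) (w x) := fun w hw => by
    rw [hM.apply_rev, hw, hw, hJ]
  rcases orbMin_mem M x with h | h | h | h <;> rw [h]
  · exact ⟨1, fun w _ => by simp⟩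
  · exact ⟨-1, fun w _ => by simp [hM.involutive x, hB.neg]⟩
  · exact ⟨-1, fun w hw => by simp [hmirror w hw, hB.neg]⟩
  · exact ⟨1, fun w hw => by
      rw [hM.apply_rev, hM.involutive, hw x, hw (M x), hJ, one_smul]⟩

theorem exists_prod_transversal_eq_smul (hM : IsSymMatching M) (hB : B.IsAlt)
    (hJ : ∀ u v, B (J u) (J v) = B v u) {β : Type*} [Fintype β] (y : β → Fin N)
    (hinj : Function.Injective fun k => orbMin M (y k))
    (hsurj : ∀ x, ∃ k, orbMin M (y k) = orbMin M x) :
    ∃ ε : ℤˣ, ∀ w : Fin N → V, IsMirrored J w →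
      ∏ k, B (w (y k)) (w (M (y k))) = ε • matchProd B M w := by
  choose e he using fun x => exists_pairing_eq_smul_orbMin hM hB hJ x
  refine ⟨∏ k, e (y k), fun w hw => ?_⟩
  have hreps : ∏ k, B (w (orbMin M (y k))) (w (M (orbMin M (y k)))) = matchProd B M w := by
    refine Finset.prod_bij (fun k _ => orbMin M (y k)) (fun k _ => orbMin_mem_orbReps hM _)
      (fun k _ k' _ h => hinj h) (fun x hx => ?_) fun _ _ => rfl
    obtain ⟨k, hk⟩ := hsurj x
    exact ⟨k, Finset.mem_univ k, hk.trans (mem_orbReps.1 hx)⟩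
  rw [Finset.prod_congr rfl fun k _ => he (y k) w hw, Finset.prod_smul, hreps]

theorem exists_matchProd_comp_eq_smul (hM : IsSymMatching M) (hB : B.IsAlt)
    (hJ : ∀ u v, B (J u) (J v) = B v u) {θ : Equiv.Perm (Fin N)}
    (hθ : ∀ x, θ x.rev = (θ x).rev) :
    ∃ ε : ℤˣ, ∀ w : Fin N → V, IsMirrored J w →
      matchProd B M (w ∘ θ) = ε • matchProd B (θ * M * θ⁻¹) w := by
  obtain ⟨ε, hε⟩ := exists_prod_transversal_eq_smul (hM.conj hθ) hB hJ
    (fun k : orbReps M => θ k)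
    (fun k k' h => Subtype.ext <| by
      rw [← mem_orbReps.1 k.2, ← mem_orbReps.1 k'.2]
      exact (orbMin_conj_eq_iff hM hθ).1 h)
    (fun x => ⟨⟨orbMin M (θ.symm x), orbMin_mem_orbReps hM _⟩, by
      conv_rhs => rw [← θ.apply_symm_apply x]
      exact (orbMin_conj_eq_iff hM hθ).2 (orbMin_orbMin hM _)⟩)
  refine ⟨ε, fun w hw => ?_⟩
  rw [← hε w hw, matchProd, ← Finset.prod_coe_sort]
  simp

theorem matchProd_ne_zero_iff [IsDomain R] (hM : IsSymMatching M) (hB : B.IsAlt)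
    (hJ : ∀ u v, B (J u) (J v) = B v u) {w : Fin N → V} (hw : IsMirrored J w) :
    matchProd B M w ≠ 0 ↔ ∀ x, B (w x) (w (M x)) ≠ 0 := by
  rw [matchProd, Finset.prod_ne_zero_iff]
  refine ⟨fun h x => ?_, fun h x _ => h x⟩
  obtain ⟨ε, hε⟩ := exists_pairing_eq_smul_orbMin hM hB hJ x
  rw [hε w hw, smul_ne_zero_iff_ne]
  exact h _ (orbMin_mem_orbReps hM x)

theorem exists_matchProd_eq_smul_mul_prod_erase (hM : IsSymMatching M) (hB : B.IsAlt)
    (hJ : ∀ u v, B (J u) (J v) = B v u) (z : Fin N) :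
    ∃ ε : ℤˣ, ∀ w : Fin N → V, IsMirrored J w →
      matchProd B M w = ε • (B (w z) (w (M z)) *
        ∏ x ∈ (orbReps M).erase (orbMin M z), B (w x) (w (M x))) := by
  obtain ⟨ε, hε⟩ := exists_pairing_eq_smul_orbMin hM hB hJ z
  refine ⟨ε, fun w hw => ?_⟩
  rw [matchProd, ← Finset.mul_prod_erase _ _ (orbMin_mem_orbReps hM z), hε w hw, smul_mul_assoc,
    smul_smul, Int.units_mul_self, one_smul]

end MatchProd

theorem exists_lt_of_toLex_lt {α : Type*} [LinearOrder α] {f g : α → α} (hf : f.Involutive)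
    (hg : g.Involutive) (h : toLex f < toLex g) :
    ∃ q, f q < g q ∧ q ≤ f q ∧ q < f (g q) ∧ q < g (f q) := by
  obtain ⟨q, heq, hlt⟩ := h
  replace heq : ∀ r, r < q → f r = g r := heq
  replace hlt : f q < g q := hlt
  have hfg : q < f (g q) := by
    refine lt_of_not_ge fun hle => ?_
    rcases hle.lt_or_eq with hr | hr
    · exact hr.ne (hg.injective ((heq _ hr).symm.trans (hf (g q))))
    · exact hlt.ne (hf.injective ((hf q).trans hr.symm))
  have hgf : q < g (f q) := by
    refine lt_of_not_ge fun hle => ?_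
    rcases hle.lt_or_eq with hr | hr
    · exact hr.ne (hf.injective ((heq _ hr).trans (hg (f q))))
    · exact hlt.ne (hg.injective (hr.trans (hg q).symm))
  refine ⟨q, hlt, le_of_not_gt fun hr => hgf.ne ?_, hfg, hgf⟩
  rw [← heq _ hr, hf]

section Pfaffian

variable {ι R V : Type*} [Fintype ι] [CommRing R] [AddCommGroup V] [Module R V]
  (B : V →ₗ[R] V →ₗ[R] R)

open Classical in
theorem prod_pairing_update (u : ι × Bool → V) (k : ι × Bool) (v : V) :
    ∏ i, B (Function.update u k v (i, false)) (Function.update u k v (i, true)) =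
      B (Function.update u k v (k.1, false)) (Function.update u k v (k.1, true)) *
        ∏ i ∈ Finset.univ.erase k.1, B (u (i, false)) (u (i, true)) := by
  rw [← Finset.mul_prod_erase _ _ (Finset.mem_univ k.1)]
  congr 1
  refine Finset.prod_congr rfl fun i hi => ?_
  have hne : ∀ b, (i, b) ≠ k := fun b h => Finset.ne_of_mem_erase hi (congrArg Prod.fst h)
  rw [Function.update_of_ne (hne _), Function.update_of_ne (hne _)]

/-- The product of the pairings of disjoint pairs of variables, as a multilinear map. -/
def pairProd : MultilinearMap R (fun _ : ι × Bool => V) R := by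
  classical
  exact MultilinearMap.mk' (fun u => ∏ i, B (u (i, false)) (u (i, true)))
    (fun u k v v' => by
      simp only [prod_pairing_update, ← add_mul]
      obtain ⟨i, _ | _⟩ := k <;> simp)
    (fun u k c v => by
      simp only [prod_pairing_update, smul_eq_mul, ← mul_assoc]
      obtain ⟨i, _ | _⟩ := k <;> simp)

theorem pairProd_apply (u : ι × Bool → V) :
    pairProd B u = ∏ i, B (u (i, false)) (u (i, true)) := rfl

/-- For an alternating form `B`, the sum is a multiple of the Pfaffian of a Gram matrix. -/
theorem sum_sign_smul_pairProd_eq_zero {𝕜 : Type*} [Field 𝕜] [Module 𝕜 V] [Module.Finite 𝕜 V]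
    [DecidableEq ι] (B : V →ₗ[𝕜] V →ₗ[𝕜] 𝕜) (hcard : Module.finrank 𝕜 V < 2 * Fintype.card ι)
    (u : ι × Bool → V) :
    ∑ σ : Equiv.Perm (ι × Bool), Equiv.Perm.sign σ • pairProd B (u ∘ σ) = 0 := by
  have h := (MultilinearMap.alternatization (pairProd B)).map_linearDependent u fun hli => by
    have := hli.fintype_card_le_finrank
    rw [Fintype.card_prod, Fintype.card_bool] at this
    omega
  rw [MultilinearMap.alternatization_apply] at h
  exact h

end Pfaffian

section Flip

variable {ι : Type*} [DecidableEq ι] {σ : Equiv.Perm (ι × Bool)}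

theorem exists_prodCongr_of_apply_not [Finite ι]
    (hσ : ∀ i b, σ (i, !b) = ((σ (i, b)).1, !(σ (i, b)).2)) :
    ∃ (ρ : Equiv.Perm ι) (s : Finset ι), σ = Equiv.prodCongrLeft (fun _ : Bool => ρ) *
      Equiv.prodCongrRight fun i => if i ∈ s then Equiv.swap false true else 1 := by
  cases nonempty_fintype ι
  have hσ_true : ∀ i, σ (i, true) = ((σ (i, false)).1, !(σ (i, false)).2) := fun i => hσ i false
  have hinj : Function.Injective fun i => (σ (i, false)).1 := fun i j hij => by
    by_cases hb : (σ (i, false)).2 = (σ (j, false)).2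
    · exact congrArg Prod.fst (σ.injective (Prod.ext hij hb))
    · refine congrArg Prod.fst (σ.injective (a₁ := (i, false)) (a₂ := (j, true)) ?_)
      rw [hσ_true]
      exact Prod.ext hij (Bool.eq_not_of_ne hb)
  refine ⟨Equiv.ofBijective _ (Finite.injective_iff_bijective.1 hinj),
    Finset.univ.filter fun i => (σ (i, false)).2 = true, Equiv.ext ?_⟩
  rintro ⟨i, _ | _⟩ <;> refine Prod.ext (by simp [hσ_true]) ?_ <;>
    cases h : (σ (i, false)).2 <;> simp [hσ_true, h]

theorem pairProd_comp_of_apply_not [Fintype ι] {R V : Type*} [CommRing R] [AddCommGroup V]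
    [Module R V] {B : V →ₗ[R] V →ₗ[R] R} (hB : B.IsAlt)
    (hσ : ∀ i b, σ (i, !b) = ((σ (i, b)).1, !(σ (i, b)).2)) (u : ι × Bool → V) :
    pairProd B (u ∘ σ) = Equiv.Perm.sign σ • pairProd B u := by
  obtain ⟨ρ, s, rfl⟩ := exists_prodCongr_of_apply_not hσ
  have hsign : Equiv.Perm.sign (Equiv.prodCongrLeft (fun _ : Bool => ρ) *
      Equiv.prodCongrRight fun i => if i ∈ s then Equiv.swap false true else 1) =
      ∏ i, if i ∈ s then -1 else 1 := by
    rw [map_mul, Equiv.Perm.sign_prodCongrLeft, Equiv.Perm.sign_prodCongrRight, Fintype.prod_bool,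
      Int.units_mul_self, one_mul]
    exact Finset.prod_congr rfl fun i _ => by split_ifs <;> simp
  rw [hsign, pairProd_apply, pairProd_apply,
    ← Equiv.prod_comp ρ fun i => B (u (i, false)) (u (i, true)), ← Finset.prod_smul]
  refine Finset.prod_congr rfl fun i _ => ?_
  by_cases hi : i ∈ s <;> simp [hi, hB.neg]

end Flip

/-- A family of pairwise nested edges of `M`. The endpoints of the `i`-th edge are `pt (i, false)`
and `pt (i, true)`, in no particular order. -/
structure IsNesting {N : ℕ} {ι : Type*} (M : Equiv.Perm (Fin N)) (pt : ι × Bool → Fin N) :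
    Prop where
  injective : Function.Injective pt
  apply_pt : ∀ i b, M (pt (i, b)) = pt (i, !b)
  strictAntiOn : StrictAntiOn M (Set.range pt)

namespace IsNesting

variable {N : ℕ} {ι : Type*} {M : Equiv.Perm (Fin N)} {pt : ι × Bool → Fin N}

theorem rev_ne (h : IsNesting M pt) (hM : IsSymMatching M) (x y : ι × Bool) :
    (pt x).rev ≠ pt y := by
  intro hxy
  have hmem : (M (pt x)).rev ∈ Set.range pt := by
    rw [← hM.apply_rev, hxy]
    exact ⟨_, (h.apply_pt y.1 y.2).symm⟩
  have hM_rev : M (M (pt x)).rev = (pt x).rev := by rw [hM.apply_rev, hM.involutive]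
  rcases lt_trichotomy (pt x) (M (pt x)).rev with hlt | heq | hgt
  · have hlt' := h.strictAntiOn ⟨x, rfl⟩ hmem hlt
    rw [hM_rev, ← Fin.rev_lt_rev, Fin.rev_rev] at hlt'
    exact hlt.not_gt hlt'
  · exact hM.ne_rev (pt x) (Fin.rev_eq_iff.1 heq.symm)
  · have hgt' := h.strictAntiOn hmem ⟨x, rfl⟩ hgt
    rw [hM_rev, ← Fin.rev_lt_rev, Fin.rev_rev] at hgt'
    exact hgt.not_gt hgt'

/-- The points of a nesting, marked `false`, together with their mirror images, marked `true`. -/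
def emb (h : IsNesting M pt) (hM : IsSymMatching M) : (ι × Bool) × Bool ↪ Fin N where
  toFun x := if x.2 then (pt x.1).rev else pt x.1
  inj' := by
    rintro ⟨x, _ | _⟩ ⟨y, _ | _⟩ hxy <;>
      simp only [if_true, Bool.false_eq_true, if_false] at hxy
    · rw [h.injective hxy]
    · exact absurd hxy.symm (h.rev_ne hM _ _)
    · exact absurd hxy (h.rev_ne hM _ _)
    · rw [h.injective (Fin.rev_injective hxy)]

theorem emb_false (h : IsNesting M pt) (hM : IsSymMatching M) (x : ι × Bool) :
    h.emb hM (x, false) = pt x := rfl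

theorem emb_true (h : IsNesting M pt) (hM : IsSymMatching M) (x : ι × Bool) :
    h.emb hM (x, true) = (pt x).rev := rfl

theorem rev_emb (h : IsNesting M pt) (hM : IsSymMatching M) (x : ι × Bool) (c : Bool) :
    (h.emb hM (x, c)).rev = h.emb hM (x, !c) := by
  cases c <;> simp [emb_false, emb_true]

theorem apply_emb (h : IsNesting M pt) (hM : IsSymMatching M) (i : ι) (b c : Bool) :
    M (h.emb hM ((i, b), c)) = h.emb hM ((i, !b), c) := by
  cases c <;> simp [emb_false, emb_true, h.apply_pt, hM.apply_rev]

theorem strictAntiOn_range_emb (h : IsNesting M pt) (hM : IsSymMatching M) (c : Bool) :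
    StrictAntiOn M (Set.range fun x => h.emb hM (x, c)) := by
  rintro _ ⟨x, rfl⟩ _ ⟨y, rfl⟩ hxy
  cases c
  · exact h.strictAntiOn ⟨x, rfl⟩ ⟨y, rfl⟩ hxy
  · simp only [emb_true, hM.apply_rev, Fin.rev_lt_rev] at hxy ⊢
    exact h.strictAntiOn ⟨y, rfl⟩ ⟨x, rfl⟩ hxy

theorem rev_mem_range_emb (h : IsNesting M pt) (hM : IsSymMatching M) {z : Fin N} :
    z.rev ∈ Set.range (h.emb hM) ↔ z ∈ Set.range (h.emb hM) := by
  constructor <;> rintro ⟨⟨x, c⟩, hx⟩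
  · exact ⟨(x, !c), by rw [← rev_emb, hx, Fin.rev_rev]⟩
  · exact ⟨(x, !c), by rw [← rev_emb, hx]⟩

theorem apply_mem_range_emb (h : IsNesting M pt) (hM : IsSymMatching M) {z : Fin N} :
    M z ∈ Set.range (h.emb hM) ↔ z ∈ Set.range (h.emb hM) := by
  constructor <;> rintro ⟨⟨⟨i, b⟩, c⟩, hx⟩
  · exact ⟨((i, !b), c), by rw [← apply_emb, hx, hM.involutive]⟩
  · exact ⟨((i, !b), c), by rw [← apply_emb, hx]⟩

theorem notMem_range_emb (h : IsNesting M pt) (hM : IsSymMatching M) {z : Fin N}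
    (hz : ∀ i, orbMin M (pt (i, false)) ≠ orbMin M z) : z ∉ Set.range (h.emb hM) := by
  rintro ⟨⟨⟨i, b⟩, c⟩, rfl⟩
  refine hz i ((orbMin_eq_orbMin_iff hM).2 ?_)
  rw [← h.emb_false hM, apply_emb, rev_emb, rev_emb]
  cases b <;> cases c <;> simp

variable [Fintype ι]

/-- The permutation of all points, commuting with the reversal, that is induced by a permutation of
the points of a nesting. -/
def extend (h : IsNesting M pt) (hM : IsSymMatching M) (σ : Equiv.Perm (ι × Bool)) :
    Equiv.Perm (Fin N) :=
  Equiv.Perm.viaFintypeEmbedding (Equiv.prodCongr σ (Equiv.refl Bool) : Equiv.Perm _) (h.emb hM)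

theorem extend_emb (h : IsNesting M pt) (hM : IsSymMatching M) (σ : Equiv.Perm (ι × Bool))
    (x : ι × Bool) (c : Bool) : h.extend hM σ (h.emb hM (x, c)) = h.emb hM (σ x, c) :=
  Equiv.Perm.viaFintypeEmbedding_apply_image _ (h.emb hM) (x, c)

theorem extend_pt (h : IsNesting M pt) (hM : IsSymMatching M) (σ : Equiv.Perm (ι × Bool))
    (x : ι × Bool) : h.extend hM σ (pt x) = pt (σ x) :=
  h.extend_emb hM σ x false

theorem extend_of_notMem (h : IsNesting M pt) (hM : IsSymMatching M) (σ : Equiv.Perm (ι × Bool))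
    {z : Fin N} (hz : z ∉ Set.range (h.emb hM)) : h.extend hM σ z = z :=
  Equiv.Perm.viaFintypeEmbedding_apply_notMem_range _ _ hz

theorem extend_one (h : IsNesting M pt) (hM : IsSymMatching M) : h.extend hM 1 = 1 := by
  ext1 z
  by_cases hz : z ∈ Set.range (h.emb hM)
  · obtain ⟨⟨x, c⟩, rfl⟩ := hz
    rw [extend_emb, Equiv.Perm.one_apply, Equiv.Perm.one_apply]
  · exact h.extend_of_notMem hM 1 hz

theorem extend_rev (h : IsNesting M pt) (hM : IsSymMatching M) (σ : Equiv.Perm (ι × Bool))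
    (z : Fin N) : h.extend hM σ z.rev = (h.extend hM σ z).rev := by
  by_cases hz : z ∈ Set.range (h.emb hM)
  · obtain ⟨⟨x, c⟩, rfl⟩ := hz
    rw [rev_emb, extend_emb, extend_emb, rev_emb]
  · rw [h.extend_of_notMem hM σ hz, h.extend_of_notMem hM σ (mt (h.rev_mem_range_emb hM).1 hz)]

theorem conj_extend_emb (h : IsNesting M pt) (hM : IsSymMatching M) (σ : Equiv.Perm (ι × Bool))
    (i : ι) (b c : Bool) :
    (h.extend hM σ * M * (h.extend hM σ)⁻¹) (h.emb hM (σ (i, b), c)) =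
      h.emb hM (σ (i, !b), c) := by
  rw [← extend_emb, ← extend_emb, ← apply_emb]
  simp

theorem conj_extend_of_notMem (h : IsNesting M pt) (hM : IsSymMatching M)
    (σ : Equiv.Perm (ι × Bool)) {z : Fin N} (hz : z ∉ Set.range (h.emb hM)) :
    (h.extend hM σ * M * (h.extend hM σ)⁻¹) z = M z := by
  have hz' : (h.extend hM σ)⁻¹ z = z := by
    rw [Equiv.Perm.inv_eq_iff_eq, h.extend_of_notMem hM σ hz]
  rw [Equiv.Perm.mul_apply, Equiv.Perm.mul_apply, hz',
    h.extend_of_notMem hM σ (mt (h.apply_mem_range_emb hM).1 hz)]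

theorem toLex_conj_extend_le (h : IsNesting M pt) (hM : IsSymMatching M)
    (σ : Equiv.Perm (ι × Bool)) :
    toLex ((h.extend hM σ * M * (h.extend hM σ)⁻¹ : Equiv.Perm (Fin N)) : Fin N → Fin N) ≤
      toLex (M : Fin N → Fin N) := by
  refine not_lt.1 fun hlt => ?_
  obtain ⟨q, hlt, -, hq, -⟩ := exists_lt_of_toLex_lt hM.involutive
    (hM.conj (h.extend_rev hM σ)).involutive hlt
  by_cases hmem : q ∈ Set.range (h.emb hM)
  · obtain ⟨⟨x, c⟩, rfl⟩ := hmem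
    obtain ⟨⟨i, b⟩, rfl⟩ := σ.surjective x
    refine hq.not_gt ?_
    conv_rhs => rw [← hM.involutive (h.emb hM (σ (i, b), c))]
    exact h.strictAntiOn_range_emb hM c ⟨_, (h.apply_emb hM _ _ c).symm⟩
      ⟨_, (h.conj_extend_emb hM σ i b c).symm⟩ hlt
  · exact hlt.ne (h.conj_extend_of_notMem hM σ hmem).symm

theorem apply_not_of_commute_extend (h : IsNesting M pt) (hM : IsSymMatching M)
    {σ : Equiv.Perm (ι × Bool)} (hσ : Commute (h.extend hM σ) M) (i : ι) (b : Bool) :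
    σ (i, !b) = ((σ (i, b)).1, !(σ (i, b)).2) := by
  apply h.injective
  have hσ' := DFunLike.congr_fun hσ.eq (pt (i, b))
  simp only [Equiv.Perm.mul_apply, h.apply_pt, h.extend_pt] at hσ'
  rw [hσ', ← h.apply_pt]

section MatchProd

variable {R V : Type*} [CommRing R] [AddCommGroup V] [Module R V]
  {B : V →ₗ[R] V →ₗ[R] R} {J : V → V}

theorem exists_matchProd_comp_extend_eq_smul (h : IsNesting M pt) (hM : IsSymMatching M)
    (hB : B.IsAlt) (hJ : ∀ u v, B (J u) (J v) = B v u) :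
    ∃ ε : ℤˣ, ∀ w : Fin N → V, IsMirrored J w → ∃ r : R, ∀ σ : Equiv.Perm (ι × Bool),
      matchProd B M (w ∘ h.extend hM σ) = ε • (pairProd B (w ∘ pt ∘ σ) * r) := by
  let far := {x // orbMin M x = x ∧ ∀ i, orbMin M (pt (i, false)) ≠ orbMin M x}
  have hinj : Function.Injective fun i => orbMin M (pt (i, false)) := fun i j hij => by
    have hij' := (orbMin_eq_orbMin_iff hM).1 hij
    rw [← h.emb_false hM, ← h.emb_false hM, apply_emb, rev_emb, rev_emb] at hij'
    simpa using hij'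
  obtain ⟨ε, hε⟩ := exists_prod_transversal_eq_smul hM hB hJ
    (Sum.elim (fun i => pt (i, false)) (Subtype.val : far → Fin N))
    (by
      rintro (i | ⟨x, hx, hx'⟩) (j | ⟨z, hz, hz'⟩) hij
      · rw [hinj hij]
      · exact absurd hij (hz' i)
      · exact absurd hij.symm (hx' j)
      · exact congrArg Sum.inr (Subtype.ext (hx.symm.trans (hij.trans hz))))
    (fun x => by
      by_cases hx : ∃ i, orbMin M (pt (i, false)) = orbMin M x
      · exact ⟨Sum.inl hx.choose, hx.choose_spec⟩
      · rw [not_exists, ← orbMin_orbMin hM] at hx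
        exact ⟨Sum.inr ⟨orbMin M x, orbMin_orbMin hM x, hx⟩, orbMin_orbMin hM x⟩)
  refine ⟨ε, fun w hw => ⟨∏ x : far, B (w x) (w (M x)), fun σ => ?_⟩⟩
  have hfar : ∀ x : far, B (w (h.extend hM σ x)) (w (h.extend hM σ (M x))) = B (w x) (w (M x)) :=
    fun x => by
      have hx := h.notMem_range_emb hM x.2.2
      rw [h.extend_of_notMem hM σ hx,
        h.extend_of_notMem hM σ (mt (h.apply_mem_range_emb hM).1 hx)]
  have hprod := hε (w ∘ h.extend hM σ) (hw.comp (h.extend_rev hM σ))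
  rw [← inv_smul_eq_iff, Int.units_inv_eq_self] at hprod
  rw [← hprod, Fintype.prod_sum_type]
  congr 2
  · simp [h.extend_pt, h.apply_pt, pairProd_apply]
  · exact Finset.prod_congr rfl fun x _ => hfar x

theorem matchProd_comp_extend_of_commute (h : IsNesting M pt) (hM : IsSymMatching M)
    (hB : B.IsAlt) (hJ : ∀ u v, B (J u) (J v) = B v u) {σ : Equiv.Perm (ι × Bool)} [DecidableEq ι]
    (hσ : Commute (h.extend hM σ) M) {w : Fin N → V} (hw : IsMirrored J w) :
    matchProd B M (w ∘ h.extend hM σ) = Equiv.Perm.sign σ • matchProd B M w := by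
  obtain ⟨ε, hε⟩ := h.exists_matchProd_comp_extend_eq_smul hM hB hJ
  obtain ⟨r, hr⟩ := hε w hw
  have hone := hr 1
  rw [extend_one, Equiv.Perm.coe_one, Equiv.Perm.coe_one, Function.comp_id] at hone
  rw [hr, ← Function.comp_assoc,
    pairProd_comp_of_apply_not hB (h.apply_not_of_commute_extend hM hσ), hone, smul_mul_assoc,
    smul_comm]
  rfl

/-- This is the relation that straightens nestings with too many edges. -/
theorem sum_sign_smul_matchProd_comp_extend_eq_zero {𝕜 : Type*} [Field 𝕜] [Module 𝕜 V]
    [Module.Finite 𝕜 V] [DecidableEq ι] {B : V →ₗ[𝕜] V →ₗ[𝕜] 𝕜} (h : IsNesting M pt)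
    (hM : IsSymMatching M) (hB : B.IsAlt) (hJ : ∀ u v, B (J u) (J v) = B v u)
    (hcard : Module.finrank 𝕜 V < 2 * Fintype.card ι) {w : Fin N → V} (hw : IsMirrored J w) :
    ∑ σ, Equiv.Perm.sign σ • matchProd B M (w ∘ h.extend hM σ) = 0 := by
  obtain ⟨ε, hε⟩ := h.exists_matchProd_comp_extend_eq_smul hM hB hJ
  obtain ⟨r, hr⟩ := hε w hw
  have hpf := sum_sign_smul_pairProd_eq_zero B hcard (w ∘ pt)
  simp only [hr, smul_comm _ ε, ← smul_mul_assoc, ← Finset.smul_sum, ← Finset.sum_mul]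
  rw [show ∑ σ : Equiv.Perm (ι × Bool), Equiv.Perm.sign σ • pairProd B (w ∘ pt ∘ σ) = 0 from hpf,
    smul_zero, zero_mul]

end MatchProd

end IsNesting

section Straightening

variable {N : ℕ} {M : Equiv.Perm (Fin N)}

theorem exists_nested_of_not_lisLE (hM : IsSymMatching M) {l : ℕ}
    (hlis : ¬ lisLE (Fin.revPerm * M) (2 * l)) :
    ∃ a : Fin (l + 1) → Fin N, StrictMono a ∧ StrictAnti (M ∘ a) ∧ ∀ i, a i < M (a i) := by
  unfold lisLE at hlis
  push Not at hlis
  obtain ⟨k, f, hf, hMf, hk⟩ := hlis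
  replace hMf : StrictAnti (M ∘ f) := fun i j hij => Fin.rev_lt_rev.1 (hMf hij)
  let mid : Fin k := ⟨l, by omega⟩
  rcases (hM.ne_self (f mid)).lt_or_gt with hmid | hmid
  · refine ⟨M ∘ f ∘ fun i => ⟨2 * l - i, by omega⟩, ?_, ?_, fun i => ?_⟩
    · exact fun i j hij => hMf (Fin.mk_lt_mk.2 (by omega))
    · intro i j hij
      simp only [Function.comp_apply, hM.involutive _]
      exact hf (Fin.mk_lt_mk.2 (by omega))
    · have hle : mid ≤ ⟨2 * l - i, by omega⟩ := Fin.mk_le_mk.2 (by omega)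
      simp only [Function.comp_apply, hM.involutive _]
      exact (hMf.antitone hle).trans_lt (hmid.trans_le (hf.monotone hle))
  · refine ⟨f ∘ Fin.castLE (by omega), hf.comp (Fin.strictMono_castLE _),
      hMf.comp_strictMono (Fin.strictMono_castLE _), fun i => ?_⟩
    have hle : Fin.castLE (by omega) i ≤ mid := Fin.mk_le_mk.2 (by omega)
    exact (hf.monotone hle).trans_lt (hmid.trans_le (hMf.antitone hle))

theorem exists_isNesting (hM : IsSymMatching M) {l : ℕ}
    (hlis : ¬ lisLE (Fin.revPerm * M) (2 * l)) :
    ∃ pt : Fin (l + 1) × Bool → Fin N, IsNesting M pt := by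
  obtain ⟨a, ha, hMa, hlt⟩ := exists_nested_of_not_lisLE hM hlis
  have hcross : ∀ i j, a i < M (a j) := fun i j => by
    rcases le_total i j with hij | hij
    · exact (ha.monotone hij).trans_lt (hlt j)
    · exact (hlt i).trans_le (hMa.antitone hij)
  refine ⟨fun x => if x.2 then M (a x.1) else a x.1, ?_, ?_, ?_⟩
  · rintro ⟨i, _ | _⟩ ⟨j, _ | _⟩ hij <;>
      simp only [Prod.mk.injEq, Bool.false_eq_true, Bool.true_eq_false, if_true, if_false,
        and_true, and_false, EmbeddingLike.apply_eq_iff_eq] at hij ⊢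
    · exact ha.injective hij
    · exact absurd hij (hcross i j).ne
    · exact absurd hij (hcross j i).ne'
    · exact ha.injective hij
  · rintro i (_ | _) <;> simp [hM.involutive _]
  · rintro _ ⟨⟨i, _ | _⟩, rfl⟩ _ ⟨⟨j, _ | _⟩, rfl⟩ hij <;>
      simp only [hM.involutive _, Bool.false_eq_true, if_true, if_false] at hij ⊢
    · exact hMa (ha.lt_iff_lt.1 hij)
    · exact hcross j i
    · exact absurd hij (hcross j i).not_gt
    · exact ha (hMa.lt_iff_gt.1 hij)

variable {𝕜 V A : Type*} [Field 𝕜] [AddCommGroup V] [Module 𝕜 V] {B : V →ₗ[𝕜] V →ₗ[𝕜] 𝕜}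
  {J : V → V} {w : A → Fin N → V}

/-- The values of `matchProd B M` on the families of a set `w` of test families. -/
def matchVec (B : V →ₗ[𝕜] V →ₗ[𝕜] 𝕜) (w : A → Fin N → V) (M : Equiv.Perm (Fin N)) : A → 𝕜 :=
  fun a => matchProd B M (w a)

theorem IsNesting.matchVec_comp_extend_mem_span {ι : Type*} [Fintype ι] {pt : ι × Bool → Fin N}
    (h : IsNesting M pt) (hB : B.IsAlt) (hJ : ∀ u v, B (J u) (J v) = B v u)
    (hw : ∀ a, IsMirrored J (w a)) (hM : IsSymMatching M) {σ : Equiv.Perm (ι × Bool)}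
    (hσ : ¬ Commute (h.extend hM σ) M) :
    matchVec B (fun a => w a ∘ h.extend hM σ) M ∈
      Submodule.span 𝕜 (matchVec B w '' {M' | IsSymMatching M' ∧
        toLex (M' : Fin N → Fin N) < toLex (M : Fin N → Fin N)}) := by
  obtain ⟨ε, hε⟩ := exists_matchProd_comp_eq_smul hM hB hJ (h.extend_rev hM σ)
  have hvec : matchVec B (fun a => w a ∘ h.extend hM σ) M =
      (ε : ℤ) • matchVec B w (h.extend hM σ * M * (h.extend hM σ)⁻¹) := by
    ext a
    exact hε (w a) (hw a)
  have hlt := (h.toLex_conj_extend_le hM σ).lt_of_ne fun heq =>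
    hσ (mul_inv_eq_iff_eq_mul.1 (DFunLike.coe_injective (toLex_inj.1 heq)))
  rw [hvec]
  refine zsmul_mem (Submodule.subset_span (Set.mem_image_of_mem _ ?_)) _
  exact ⟨hM.conj (h.extend_rev hM σ), hlt⟩

/-- In the relation between the `matchProd B M (w ∘ h.extend hM σ)`, the permutations that stabilize
`M` contribute `matchProd B M w` with the same sign, and the others lexicographically smaller
matchings. -/
theorem matchVec_mem_span_of_isNesting [CharZero 𝕜] [Module.Finite 𝕜 V] {ι : Type*} [Fintype ι]
    (hB : B.IsAlt) (hJ : ∀ u v, B (J u) (J v) = B v u) (hw : ∀ a, IsMirrored J (w a))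
    (hM : IsSymMatching M) {pt : ι × Bool → Fin N} (h : IsNesting M pt)
    (hcard : Module.finrank 𝕜 V < 2 * Fintype.card ι) :
    matchVec B w M ∈ Submodule.span 𝕜 (matchVec B w '' {M' | IsSymMatching M' ∧
      toLex (M' : Fin N → Fin N) < toLex (M : Fin N → Fin N)}) := by
  classical
  set S := Submodule.span 𝕜 (matchVec B w '' {M' | IsSymMatching M' ∧
      toLex (M' : Fin N → Fin N) < toLex (M : Fin N → Fin N)})
  let term : Equiv.Perm (ι × Bool) → A → 𝕜 := fun σ =>
    Equiv.Perm.sign σ • matchVec B (fun a => w a ∘ h.extend hM σ) M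
  have hsum : ∑ σ, term σ = 0 := by
    ext a
    rw [Finset.sum_apply]
    exact h.sum_sign_smul_matchProd_comp_extend_eq_zero hM hB hJ hcard (hw a)
  have hstab : ∀ σ, Commute (h.extend hM σ) M → term σ = matchVec B w M := fun σ hσ => by
    ext a
    simp only [term]
    rw [Pi.smul_apply, matchVec, h.matchProd_comp_extend_of_commute hM hB hJ hσ (hw a), smul_smul,
      Int.units_mul_self, one_smul, matchVec]
  have hsmaller : ∀ σ, ¬ Commute (h.extend hM σ) M → term σ ∈ S := fun σ hσ =>
    zsmul_mem (h.matchVec_comp_extend_mem_span hB hJ hw hM hσ) (Equiv.Perm.sign σ : ℤ)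
  rw [← Finset.sum_filter_add_sum_filter_not _ fun σ => Commute (h.extend hM σ) M,
    Finset.sum_congr rfl fun σ hσ => hstab σ (Finset.mem_filter.1 hσ).2, Finset.sum_const,
    ← Nat.cast_smul_eq_nsmul 𝕜] at hsum
  refine (S.smul_mem_iff (Nat.cast_ne_zero.2 (Finset.card_ne_zero_of_mem (a := 1) ?_))).1
    (eq_neg_of_add_eq_zero_left hsum ▸
      S.neg_mem (S.sum_mem fun σ hσ => hsmaller σ (Finset.mem_filter.1 hσ).2))
  rw [Finset.mem_filter, h.extend_one]
  exact ⟨Finset.mem_univ _, Commute.one_left M⟩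

theorem matchVec_mem_span_of_lisLE [CharZero 𝕜] [Module.Finite 𝕜 V] {l : ℕ}
    (hV : Module.finrank 𝕜 V ≤ 2 * l) (hB : B.IsAlt) (hJ : ∀ u v, B (J u) (J v) = B v u)
    (hw : ∀ a, IsMirrored J (w a)) (hM : IsSymMatching M) :
    matchVec B w M ∈ Submodule.span 𝕜 (matchVec B w '' {M' | IsSymMatching M' ∧
      lisLE (Fin.revPerm * M') (2 * l)}) := by
  generalize hx : toLex (M : Fin N → Fin N) = x
  induction x using WellFoundedLT.induction generalizing M with
  | ind x ih =>
    by_cases hlis : lisLE (Fin.revPerm * M) (2 * l)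
    · exact Submodule.subset_span ⟨M, ⟨hM, hlis⟩, rfl⟩
    · obtain ⟨pt, h⟩ := exists_isNesting hM hlis
      refine Submodule.span_le.2 ?_ (matchVec_mem_span_of_isNesting hB hJ hw hM h
        (by rw [Fintype.card_fin]; omega))
      rintro _ ⟨M', ⟨hM', hlt⟩, rfl⟩
      exact ih _ (hx ▸ hlt) hM' rfl

end Straightening

section SymplecticForm

variable {ι R : Type*} [CommRing R]

/-- The involution of `R^ι ⊕ R^ι` acting by `1` on the first summand and by `-1` on the second. It
plays the part of the reversal of `Fin N` on vectors. -/
def signFlip (u : ι ⊕ ι → R) : ι ⊕ ι → R :=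
  Sum.elim (fun i => u (.inl i)) (fun i => -u (.inr i))

theorem signFlip_involutive : Function.Involutive (signFlip : (ι ⊕ ι → R) → ι ⊕ ι → R) :=
  fun u => by ext (i | i) <;> simp [signFlip]

variable [Fintype ι] [DecidableEq ι]

variable (ι R) in
/-- The bilinear form on `R^ι ⊕ R^ι` with matrix `Matrix.J`. -/
def symp : (ι ⊕ ι → R) →ₗ[R] (ι ⊕ ι → R) →ₗ[R] R := Matrix.toLinearMap₂' R (Matrix.J ι R)

theorem symp_apply (u v : ι ⊕ ι → R) :
    symp ι R u v = ∑ i, (u (.inr i) * v (.inl i) - u (.inl i) * v (.inr i)) := by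
  simp [symp, Matrix.toLinearMap₂'_apply', Matrix.J, Matrix.fromBlocks_mulVec, dotProduct,
    neg_mulVec, neg_add_eq_sub, Finset.sum_sub_distrib]

theorem symp_isAlt : (symp ι R).IsAlt := fun u => by
  rw [symp_apply]
  exact Finset.sum_eq_zero fun i _ => by ring

theorem symp_vecMul {A : Matrix (ι ⊕ ι) (ι ⊕ ι) R} (hA : A ∈ Matrix.symplecticGroup ι R)
    (u v : ι ⊕ ι → R) : symp ι R (u ᵥ* A) (v ᵥ* A) = symp ι R u v := by
  simp only [symp, Matrix.toLinearMap₂'_apply']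
  rw [← Matrix.mulVec_transpose A v, Matrix.mulVec_mulVec, Matrix.dotProduct_mulVec,
    Matrix.vecMul_vecMul, ← Matrix.mul_assoc, SymplecticGroup.mem_iff.1 hA,
    ← Matrix.dotProduct_mulVec]

theorem symp_signFlip (u v : ι ⊕ ι → R) : symp ι R (signFlip u) (signFlip v) = symp ι R v u := by
  simp only [symp_apply, signFlip, Sum.elim_inl, Sum.elim_inr]
  exact Finset.sum_congr rfl fun i _ => by ring

end SymplecticForm

section TestVectors

/-- The vector `e_c + f_c` of `ℂ^l ⊕ ℂ^l`, where `e` and `f` are the standard bases of the two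
summands. It is zero unless `c < l`. -/
def openerVec (l c : ℕ) : Fin l ⊕ Fin l → ℂ :=
  Sum.elim (fun i => if (i : ℕ) = c then 1 else 0) (fun i => if (i : ℕ) = c then 1 else 0)

theorem symp_openerVec (l c d : ℕ) : symp (Fin l) ℂ (openerVec l c) (openerVec l d) = 0 := by
  simp [symp_apply, openerVec]

theorem symp_openerVec_signFlip {l c : ℕ} (hc : c < l) (d : ℕ) :
    symp (Fin l) ℂ (openerVec l c) (signFlip (openerVec l d)) = if c = d then 2 else 0 := by
  have h : ∀ i : Fin l, (i : ℕ) = c ↔ i = ⟨c, hc⟩ := fun i => by simp [Fin.ext_iff]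
  simp only [symp_apply, openerVec, signFlip, Sum.elim_inl, Sum.elim_inr, h]
  rw [Finset.sum_eq_single ⟨c, hc⟩ (by simp +contextual) (by simp), if_pos rfl]
  split_ifs <;> norm_num

variable {N : ℕ} {M M' : Equiv.Perm (Fin N)} {l : ℕ}

/-- Test vectors detecting `M` among the symmetric matchings: a left endpoint of an edge of depth
`c` gets `e_c + f_c`, a right endpoint gets `e_c - f_c`. -/
def testVec (l : ℕ) (M : Equiv.Perm (Fin N)) (x : Fin N) : Fin l ⊕ Fin l → ℂ :=
  if x < M x then openerVec l (edgeDepth M x) else signFlip (openerVec l (edgeDepth M x))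

theorem isMirrored_testVec (hM : IsSymMatching M) (l : ℕ) :
    IsMirrored signFlip (testVec l M) := fun x => by
  simp only [testVec, hM.apply_rev, Fin.rev_lt_rev, edgeDepth_rev hM]
  rcases (hM.ne_self x).lt_or_gt with h | h
  · rw [if_pos h, if_neg h.not_gt, signFlip_involutive]
  · rw [if_neg h.not_gt, if_pos h]

theorem matchProd_testVec_ne_zero (hM : IsSymMatching M) (hl : lisLE (Fin.revPerm * M) (2 * l)) :
    matchProd (symp (Fin l) ℂ) M (testVec l M) ≠ 0 := by
  rw [matchProd_ne_zero_iff hM symp_isAlt symp_signFlip (isMirrored_testVec hM l)]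
  intro x
  have hne : symp (Fin l) ℂ (openerVec l (edgeDepth M x))
      (signFlip (openerVec l (edgeDepth M x))) ≠ 0 := by
    rw [symp_openerVec_signFlip (edgeDepth_lt_of_lisLE hM hl x), if_pos rfl]
    exact two_ne_zero
  rw [testVec, testVec, edgeDepth_apply hM, hM.involutive]
  rcases (hM.ne_self x).lt_or_gt with h | h
  · rwa [if_neg h.not_gt, if_pos h, ← symp_isAlt.neg, neg_ne_zero]
  · rwa [if_pos h, if_neg h.not_gt]

theorem symp_testVec_ne_zero (hM : IsSymMatching M) (hl : lisLE (Fin.revPerm * M) (2 * l))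
    {x y : Fin N} (hx : x < M x) (h : symp (Fin l) ℂ (testVec l M x) (testVec l M y) ≠ 0) :
    M y < y ∧ edgeDepth M x = edgeDepth M y := by
  rw [testVec, if_pos hx] at h
  by_cases hy : y < M y
  · rw [testVec, if_pos hy, symp_openerVec] at h
    exact absurd rfl h
  · rw [testVec, if_neg hy, symp_openerVec_signFlip (edgeDepth_lt_of_lisLE hM hl x)] at h
    exact ⟨(hM.ne_self y).lt_of_le (not_lt.1 hy), of_not_not fun hne => h (if_neg hne)⟩

theorem toLex_le_of_matchProd_testVec_ne_zero (hM : IsSymMatching M)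
    (hl : lisLE (Fin.revPerm * M) (2 * l)) (hM' : IsSymMatching M')
    (h : matchProd (symp (Fin l) ℂ) M' (testVec l M) ≠ 0) :
    toLex (M : Fin N → Fin N) ≤ toLex (M' : Fin N → Fin N) := by
  rw [matchProd_ne_zero_iff hM' symp_isAlt symp_signFlip (isMirrored_testVec hM l)] at h
  by_contra hlt
  obtain ⟨q, hMq, hq, -, hqM⟩ :=
    exists_lt_of_toLex_lt hM'.involutive hM.involutive (not_le.1 hlt)
  have hopen : q < M q := hq.trans_lt hMq
  obtain ⟨hclose, hdepth⟩ := symp_testVec_ne_zero hM hl hopen (h q)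
  rw [edgeDepth, edgeDepth, min_eq_left hopen.le, min_eq_right hclose.le] at hdepth
  refine (depth_lt_depth (M := M) hqM ?_).ne hdepth
  rwa [hM.involutive]

end TestVectors

section Mirror

variable {m : ℕ} {V : Type*} {J : V → V}

variable (m) in
/-- The points of `Fin (2 * m)` as the points `k` of the lower half together with their mirror
images. The reversal acts by negation on the second component. -/
def mirrorEquiv : Fin m × Bool ≃ Fin (2 * m) where
  toFun p := bif p.2 then (p.1.castLE (by omega) : Fin (2 * m)).rev else p.1.castLE (by omega)
  invFun x := if h : (x : ℕ) < m then (⟨x, h⟩, false) else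
    (⟨x.rev, by rw [Fin.val_rev]; omega⟩, true)
  left_inv := by
    rintro ⟨k, _ | _⟩
    · simp
    · have hk : ¬ 2 * m - (k + 1) < m := by omega
      simp [hk]
  right_inv x := by
    dsimp only
    split_ifs
    · rfl
    · exact Fin.rev_rev x

theorem rev_mirrorEquiv (p : Fin m × Bool) :
    (mirrorEquiv m p).rev = mirrorEquiv m (p.1, !p.2) := by
  obtain ⟨k, _ | _⟩ := p <;> simp [mirrorEquiv]

/-- The mirrored family that extends a family indexed by the lower half of `Fin (2 * m)`. -/
def mirror (J : V → V) (t : Fin m → V) (x : Fin (2 * m)) : V :=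
  bif ((mirrorEquiv m).symm x).2 then J (t ((mirrorEquiv m).symm x).1)
  else t ((mirrorEquiv m).symm x).1

theorem mirror_mirrorEquiv_false (J : V → V) (t : Fin m → V) (k : Fin m) :
    mirror J t (mirrorEquiv m (k, false)) = t k := by
  simp [mirror]

theorem mirror_mirrorEquiv_true (J : V → V) (t : Fin m → V) (k : Fin m) :
    mirror J t (mirrorEquiv m (k, true)) = J (t k) := by
  simp [mirror]

theorem isMirrored_mirror (hJ : J.Involutive) (t : Fin m → V) : IsMirrored J (mirror J t) := by
  intro x
  obtain ⟨⟨k, _ | _⟩, rfl⟩ := (mirrorEquiv m).surjective x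
  · rw [rev_mirrorEquiv, mirror_mirrorEquiv_false]
    exact mirror_mirrorEquiv_true J t k
  · rw [rev_mirrorEquiv, mirror_mirrorEquiv_true, hJ]
    exact mirror_mirrorEquiv_false J t k

theorem IsMirrored.mirror_eq {w : Fin (2 * m) → V} (hw : IsMirrored J w) :
    mirror J (fun k => w (mirrorEquiv m (k, false))) = w := by
  funext x
  obtain ⟨⟨k, _ | _⟩, rfl⟩ := (mirrorEquiv m).surjective x
  · rw [mirror_mirrorEquiv_false]
  · rw [mirror_mirrorEquiv_true, ← hw, rev_mirrorEquiv]
    rfl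

theorem mirror_comp_of_commute {f : V → V} (hf : ∀ v, J (f v) = f (J v)) (t : Fin m → V) :
    mirror J (f ∘ t) = f ∘ mirror J t := by
  funext x
  obtain ⟨⟨k, _ | _⟩, rfl⟩ := (mirrorEquiv m).surjective x
  · simp [mirror_mirrorEquiv_false]
  · simp [mirror_mirrorEquiv_true, hf]

theorem mirror_update_of_ne (J : V → V) (t : Fin m → V) {k : Fin m} (v : V) {x : Fin (2 * m)}
    (hx : x ≠ mirrorEquiv m (k, false)) (hx' : x ≠ (mirrorEquiv m (k, false)).rev) :
    mirror J (Function.update t k v) x = mirror J t x := by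
  have hk : ((mirrorEquiv m).symm x).1 ≠ k := fun h => by
    rw [rev_mirrorEquiv] at hx'
    rcases hb : ((mirrorEquiv m).symm x).2 with _ | _
    · exact hx ((Equiv.symm_apply_eq _).1 (Prod.ext h hb))
    · exact hx' ((Equiv.symm_apply_eq _).1 (Prod.ext h hb))
  rw [mirror, mirror, Function.update_of_ne hk]

end Mirror

section MatchMultilinear

variable {m : ℕ} {R V : Type*} [CommRing R] [AddCommGroup V] [Module R V]
  {B : V →ₗ[R] V →ₗ[R] R} {J : V → V} {M : Equiv.Perm (Fin (2 * m))}

theorem exists_matchProd_mirror_update_eq (hM : IsSymMatching M) (hB : B.IsAlt)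
    (hJJ : J.Involutive) (hJ : ∀ u v, B (J u) (J v) = B v u) (t : Fin m → V) (k : Fin m) :
    ∃ φ : V →ₗ[R] R, ∀ v, matchProd B M (mirror J (Function.update t k v)) = φ v := by
  set z := mirrorEquiv m (k, false) with hz
  obtain ⟨ε, hε⟩ := exists_matchProd_eq_smul_mul_prod_erase hM hB hJ z
  have hne : ∀ x, orbMin M x ≠ orbMin M z → ∀ v,
      mirror J (Function.update t k v) x = mirror J t x := fun x hx v => by
    rw [Ne, orbMin_eq_orbMin_iff hM] at hx
    push Not at hx
    exact mirror_update_of_ne J t v hx.1 hx.2.2.1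
  have hMz : ∀ v, mirror J (Function.update t k v) (M z) = mirror J t (M z) := fun v =>
    mirror_update_of_ne J t v (hM.ne_self z) (hM.ne_rev z)
  refine ⟨ε • ((∏ x ∈ (orbReps M).erase (orbMin M z), B (mirror J t x) (mirror J t (M x))) •
    B.flip (mirror J t (M z))), fun v => ?_⟩
  rw [hε _ (isMirrored_mirror hJJ _), hMz, hz, mirror_mirrorEquiv_false, Function.update_self,
    LinearMap.smul_apply, LinearMap.smul_apply, LinearMap.flip_apply, smul_eq_mul, mul_comm]
  refine congrArg (fun c => ε • (c * _)) (Finset.prod_congr rfl fun x hx => ?_)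
  obtain ⟨hx, hxM⟩ := Finset.mem_erase.1 hx
  rw [← mem_orbReps.1 hxM] at hx
  rw [hne x hx, hne (M x) (by rwa [orbMin_apply hM])]

/-- `matchProd` as a multilinear function of the vectors on the lower half. -/
def matchMultilinear (hM : IsSymMatching M) (hB : B.IsAlt) (hJJ : J.Involutive)
    (hJ : ∀ u v, B (J u) (J v) = B v u) : MultilinearMap R (fun _ : Fin m => V) R :=
  MultilinearMap.mk' (fun t => matchProd B M (mirror J t))
    (fun t k u v => by
      obtain ⟨φ, hφ⟩ := exists_matchProd_mirror_update_eq hM hB hJJ hJ t k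
      simp only [hφ, map_add])
    (fun t k c v => by
      obtain ⟨φ, hφ⟩ := exists_matchProd_mirror_update_eq hM hB hJJ hJ t k
      simp only [hφ, map_smul])

theorem matchMultilinear_apply (hM : IsSymMatching M) (hB : B.IsAlt) (hJJ : J.Involutive)
    (hJ : ∀ u v, B (J u) (J v) = B v u) (t : Fin m → V) :
    matchMultilinear hM hB hJJ hJ t = matchProd B M (mirror J t) := rfl

end MatchMultilinear

section MatchTensor

variable {m l : ℕ}

/-- The tensor in `(ℂ^l ⊕ ℂ^l)^{⊗ m}`, written in coordinates, that represents the multilinear form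
`matchProd`. -/
def matchTensor (l : ℕ) (M : Equiv.Perm (Fin (2 * m))) : (Fin m → Fin l ⊕ Fin l) → ℂ :=
  matchVec (symp (Fin l) ℂ) (fun a => mirror signFlip fun k => Pi.single (a k) 1) M

theorem sum_mul_matchTensor {M : Equiv.Perm (Fin (2 * m))} (hM : IsSymMatching M)
    (t : Fin m → Fin l ⊕ Fin l → ℂ) :
    ∑ a, (∏ k, t k (a k)) * matchTensor l M a =
      matchProd (symp (Fin l) ℂ) M (mirror signFlip t) := by
  have ht : t = fun k => ∑ j, t k j • (Pi.single j 1 : Fin l ⊕ Fin l → ℂ) :=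
    funext fun k => pi_eq_sum_univ' (t k)
  rw [← matchMultilinear_apply hM symp_isAlt signFlip_involutive symp_signFlip]
  conv_rhs => rw [ht]
  rw [MultilinearMap.map_sum]
  exact Finset.sum_congr rfl fun a _ =>
    (MultilinearMap.map_smul_univ (matchMultilinear hM _ _ _) (fun k => t k (a k))
      fun k => Pi.single (a k) 1).symm

theorem sum_mul_matchProd_testVec_eq_zero {s : Set (Equiv.Perm (Fin (2 * m)))} [Fintype s]
    (hs : ∀ M ∈ s, IsSymMatching M) {g : s → ℂ} (hg : ∑ M, g M • matchTensor l M.1 = 0)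
    {M₀ : Equiv.Perm (Fin (2 * m))} (hM₀ : IsSymMatching M₀) :
    ∑ M, g M * matchProd (symp (Fin l) ℂ) M.1 (testVec l M₀) = 0 := by
  have hexpand : ∀ M : s, matchProd (symp (Fin l) ℂ) M.1 (testVec l M₀) =
      ∑ a, (∏ k, testVec l M₀ (mirrorEquiv m (k, false)) (a k)) * matchTensor l M.1 a := fun M => by
    rw [sum_mul_matchTensor (hs _ M.2), (isMirrored_testVec hM₀ l).mirror_eq]
  have hcoord : ∀ a, ∑ M, g M * matchTensor l M.1 a = 0 := fun a => by
    simpa using congrFun hg a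
  simp only [hexpand, Finset.mul_sum]
  rw [Finset.sum_comm]
  refine Finset.sum_eq_zero fun a _ => ?_
  simp only [mul_left_comm (g _), ← Finset.mul_sum, hcoord, mul_zero]

theorem linearIndependent_matchTensor (m l : ℕ) :
    LinearIndependent ℂ fun M : {M : Equiv.Perm (Fin (2 * m)) |
      IsSymMatching M ∧ lisLE (Fin.revPerm * M) (2 * l)} => matchTensor l M.1 := by
  classical
  rw [Fintype.linearIndependent_iff]
  intro g hg
  by_contra! hne
  obtain ⟨M₁, hM₁⟩ := hne
  obtain ⟨M₀, hM₀, hmax⟩ := Finset.exists_max_image (Finset.univ.filter fun M => g M ≠ 0)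
    (fun M => toLex (M.1 : Fin (2 * m) → Fin (2 * m))) ⟨M₁, by simpa using hM₁⟩
  have hsum := sum_mul_matchProd_testVec_eq_zero (fun M hM => hM.1) hg M₀.2.1
  rw [Finset.sum_eq_single M₀ (fun M _ hMne => ?_) (by simp)] at hsum
  · exact mul_ne_zero (by simpa using hM₀) (matchProd_testVec_ne_zero M₀.2.1 M₀.2.2) hsum
  · by_contra hprod
    have hle := toLex_le_of_matchProd_testVec_ne_zero M₀.2.1 M₀.2.2 M.2.1
      (right_ne_zero_of_mul hprod)
    have hge := hmax M (by simpa using left_ne_zero_of_mul hprod)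
    exact hMne (Subtype.ext (DFunLike.coe_injective (toLex_inj.1 (hge.antisymm hle))))

end MatchTensor

section TensorPower

variable {κ ι R : Type*} [Fintype κ] [CommSemiring R]

variable (κ) in
/-- The Kronecker power of a matrix: the matrix, in coordinates, by which it acts on tensors with
one factor for each element of `κ`. -/
def tensorPow (X : Matrix ι ι R) : Matrix (κ → ι) (κ → ι) R :=
  Matrix.of fun a b => ∏ k, X (a k) (b k)

theorem tensorPow_apply (X : Matrix ι ι R) (a b : κ → ι) :
    tensorPow κ X a b = ∏ k, X (a k) (b k) := rfl

theorem tensorPow_smul_one [DecidableEq ι] (c : R) :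
    tensorPow κ (c • (1 : Matrix ι ι R)) = c ^ Fintype.card κ • 1 := by
  ext a b
  simp only [tensorPow_apply, Matrix.smul_apply, smul_eq_mul, Finset.prod_mul_distrib,
    Finset.prod_const, Finset.card_univ, Matrix.one_apply, Finset.prod_ite_zero, one_pow,
    funext_iff, Finset.mem_univ, forall_const]

theorem tensorPow_mul [DecidableEq κ] [Fintype ι] (X Y : Matrix ι ι R) :
    tensorPow κ (X * Y) = tensorPow κ X * tensorPow κ Y := by
  ext a b
  simp only [tensorPow_apply, Matrix.mul_apply, Fintype.prod_sum, Finset.prod_mul_distrib]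

theorem trace_tensorPow [DecidableEq κ] [Fintype ι] (X : Matrix ι ι R) :
    (tensorPow κ X).trace = X.trace ^ Fintype.card κ := by
  simp only [Matrix.trace, Matrix.diag_apply, tensorPow_apply, ← Finset.card_univ,
    ← Finset.prod_const, Fintype.prod_sum]

end TensorPower

section Doubling

variable {ι : Type*}

/-- The direct sum of a matrix and its complex conjugate, whose trace is twice the real part of the
trace. -/
def dbl (U : Matrix ι ι ℂ) : Matrix (ι ⊕ ι) (ι ⊕ ι) ℂ :=
  Matrix.fromBlocks U 0 0 (U.map (starRingEnd ℂ))

variable [Fintype ι]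

theorem dbl_mul (U V : Matrix ι ι ℂ) : dbl (U * V) = dbl U * dbl V := by
  simp [dbl, Matrix.fromBlocks_multiply, Matrix.map_mul]

theorem trace_dbl (U : Matrix ι ι ℂ) :
    (dbl U).trace = U.trace + starRingEnd ℂ U.trace := by
  simp [dbl, Matrix.trace]

theorem signFlip_vecMul_dbl (U : Matrix ι ι ℂ) (u : ι ⊕ ι → ℂ) :
    signFlip (u ᵥ* dbl U) = signFlip u ᵥ* dbl U := by
  ext (i | i) <;> simp [signFlip, dbl, Matrix.vecMul, dotProduct]

variable [DecidableEq ι]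

theorem dbl_mem_symplecticGroup {U : Matrix ι ι ℂ} (hU : U ∈ Matrix.unitaryGroup ι ℂ) :
    dbl U ∈ Matrix.symplecticGroup ι ℂ := by
  have h₁ : U * (U.map (starRingEnd ℂ))ᵀ = 1 := Matrix.mem_unitaryGroup_iff.1 hU
  have h₂ : U.map (starRingEnd ℂ) * Uᵀ = 1 := by
    simpa [Matrix.transpose_mul] using congrArg Matrix.transpose h₁
  rw [SymplecticGroup.mem_iff, dbl, Matrix.J, Matrix.fromBlocks_transpose,
    Matrix.fromBlocks_multiply, Matrix.fromBlocks_multiply]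
  simp [h₁, h₂]

theorem tensorPow_dbl_mulVec_matchTensor {m l : ℕ} {M : Equiv.Perm (Fin (2 * m))}
    (hM : IsSymMatching M) {U : Matrix (Fin l) (Fin l) ℂ}
    (hU : U ∈ Matrix.unitaryGroup (Fin l) ℂ) :
    tensorPow (Fin m) (dbl U) *ᵥ matchTensor l M = matchTensor l M := by
  funext a
  have hrow : (fun k => dbl U (a k)) = (· ᵥ* dbl U) ∘ fun k => Pi.single (a k) 1 := by
    funext k
    exact (Matrix.single_one_vecMul (a k) (dbl U)).symm
  refine (sum_mul_matchTensor hM fun k => dbl U (a k)).trans ?_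
  rw [hrow, mirror_comp_of_commute (signFlip_vecMul_dbl U)]
  simp only [matchTensor, matchVec, matchProd, Function.comp_apply,
    symp_vecMul (dbl_mem_symplecticGroup hU)]

end Doubling

section ZariskiDensity

theorem eval_eval_eq_zero_of_infinite {σ τ R : Type*} [CommRing R] [IsDomain R]
    (p : MvPolynomial σ R) (f : σ → MvPolynomial τ R) {s : τ → Set R} (hs : ∀ i, (s i).Infinite)
    (h : ∀ d ∈ Set.univ.pi s, MvPolynomial.eval (fun i => MvPolynomial.eval d (f i)) p = 0)
    (d : τ → R) : MvPolynomial.eval (fun i => MvPolynomial.eval d (f i)) p = 0 := by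
  have hbind : ∀ d, MvPolynomial.eval d (MvPolynomial.bind₁ f p) =
      MvPolynomial.eval (fun i => MvPolynomial.eval d (f i)) p := fun d =>
    MvPolynomial.eval₂Hom_bind₁ (RingHom.id R) d f p
  have hzero : MvPolynomial.bind₁ f p = 0 :=
    MvPolynomial.funext_set s hs fun d hd => by rw [hbind, h d hd, map_zero]
  rw [← hbind, hzero, map_zero]

theorem infinite_unitary_complex : (unitary ℂ : Set ℂ).Infinite := by
  have : Infinite (Set.Ioc (-Real.pi) Real.pi) :=
    Set.infinite_coe_iff.2 (Set.Ioc_infinite (by linarith [Real.pi_pos]))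
  have : Infinite Circle := Circle.argEquiv.infinite_iff.2 this
  refine (Set.infinite_range_of_injective (f := fun z : Circle => (z : ℂ))
    Subtype.val_injective).mono ?_
  rintro _ ⟨z, rfl⟩
  simp [Unitary.mem_iff, Complex.mul_conj, mul_comm, Circle.normSq_coe]

variable {ι : Type*} [Fintype ι] [DecidableEq ι]

theorem diagonal_mem_unitaryGroup {d : ι → ℂ} (hd : ∀ i, d i ∈ unitary ℂ) :
    Matrix.diagonal d ∈ Matrix.unitaryGroup ι ℂ := by
  rw [Matrix.mem_unitaryGroup_iff, Matrix.star_eq_conjTranspose, Matrix.diagonal_conjTranspose,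
    Matrix.diagonal_mul_diagonal, ← Matrix.diagonal_one]
  exact congrArg _ (funext fun i => Unitary.mul_star_self_of_mem (hd i))

theorem eval_eq_zero_of_isHermitian (p : MvPolynomial (ι × ι) ℂ)
    (hp : ∀ U ∈ Matrix.unitaryGroup ι ℂ, MvPolynomial.eval (fun ij => U ij.1 ij.2) p = 0)
    {X : Matrix ι ι ℂ} (hX : X.IsHermitian) :
    MvPolynomial.eval (fun ij => X ij.1 ij.2) p = 0 := by
  set V : Matrix ι ι ℂ := hX.eigenvectorUnitary.1
  have hV : V ∈ Matrix.unitaryGroup ι ℂ := hX.eigenvectorUnitary.2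
  let conjDiag : ι × ι → MvPolynomial ι ℂ := fun ij =>
    ∑ k, MvPolynomial.C (V ij.1 k * star V k ij.2) * MvPolynomial.X k
  have hconj : ∀ (d : ι → ℂ) (ij : ι × ι), MvPolynomial.eval d (conjDiag ij) =
      (V * Matrix.diagonal d * star V) ij.1 ij.2 := fun d ij => by
    rw [map_sum, Matrix.mul_apply]
    refine Finset.sum_congr rfl fun k _ => ?_
    rw [map_mul, MvPolynomial.eval_C, MvPolynomial.eval_X, Matrix.mul_diagonal]
    ring
  have hdiag := eval_eval_eq_zero_of_infinite p conjDiag (fun _ => infinite_unitary_complex)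
    (fun d hd => by
      simp only [hconj]
      exact hp _ (mul_mem (mul_mem hV (diagonal_mem_unitaryGroup fun i => hd i trivial))
        (Unitary.star_mem hV)))
    (RCLike.ofReal ∘ hX.eigenvalues)
  have hspec := hX.spectral_theorem
  rw [Unitary.conjStarAlgAut_apply] at hspec
  simp only [hconj] at hdiag
  rwa [hspec]

/-- Unitary matrices are Zariski dense. -/
theorem eval_eq_zero_of_unitary (p : MvPolynomial (ι × ι) ℂ)
    (hp : ∀ U ∈ Matrix.unitaryGroup ι ℂ, MvPolynomial.eval (fun ij => U ij.1 ij.2) p = 0)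
    (X : Matrix ι ι ℂ) : MvPolynomial.eval (fun ij => X ij.1 ij.2) p = 0 := by
  set H : Matrix ι ι ℂ := (realPart X).1 with hH
  set K : Matrix ι ι ℂ := (imaginaryPart X).1 with hK
  have hHK : ∀ t : ℝ, (H + (t : ℂ) • K).IsHermitian := fun t => by
    refine (realPart X).2.add ?_
    rw [IsSelfAdjoint, star_smul, (imaginaryPart X).2.star_eq, Complex.star_def,
      Complex.conj_ofReal]
  let line : ι × ι → MvPolynomial Unit ℂ := fun ij =>
    MvPolynomial.C (H ij.1 ij.2) + MvPolynomial.X () * MvPolynomial.C (K ij.1 ij.2)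
  have hline : ∀ (d : Unit → ℂ) (ij : ι × ι),
      MvPolynomial.eval d (line ij) = (H + d () • K) ij.1 ij.2 := by simp [line]
  have hX := eval_eval_eq_zero_of_infinite p line
    (fun _ => Set.infinite_range_of_injective Complex.ofReal_injective)
    (fun d hd => by
      obtain ⟨t, ht⟩ := hd () trivial
      simp only [hline, ← ht]
      exact eval_eq_zero_of_isHermitian p hp (hHK t))
    fun _ => Complex.I
  simpa only [hline, hH, hK, realPart_add_I_smul_imaginaryPart] using hX

end ZariskiDensity

section Polarization

variable {α : Type*} [Fintype α] [DecidableEq α]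

theorem sum_neg_one_pow_card_compl_of_subset (s : Finset α) :
    ∑ S with s ⊆ S, (-1 : ℤ) ^ Sᶜ.card = if s = Finset.univ then 1 else 0 := by
  rw [if_congr (Finset.compl_eq_empty_iff s).symm rfl rfl, ← Finset.sum_powerset_neg_one_pow_card]
  refine Finset.sum_nbij' compl compl ?_ ?_ ?_ ?_ fun _ _ => rfl <;>
    simp [Finset.subset_compl_comm]

/-- Expand the products over all functions `f` of the row indices; inclusion-exclusion cancels the
contribution of those that are not surjective. -/
theorem sum_neg_one_pow_mul_prod_sum {R : Type*} [CommRing R] (g : α → α → R) :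
    ∑ S : Finset α, (-1) ^ Sᶜ.card * ∏ k, ∑ q ∈ S, g k q =
      ∑ σ : Equiv.Perm α, ∏ k, g k (σ k) := by
  have hsign : ∀ f : α → α, ∑ S with Finset.univ.image f ⊆ S, (-1 : R) ^ Sᶜ.card =
      if f.Surjective then 1 else 0 := fun f => by
    have himage : Finset.univ.image f = Finset.univ ↔ f.Surjective := by
      simp [Finset.eq_univ_iff_forall, Function.Surjective]
    rw [← if_congr himage rfl rfl]
    exact_mod_cast congrArg (Int.cast (R := R))
      (sum_neg_one_pow_card_compl_of_subset (Finset.univ.image f))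
  calc ∑ S : Finset α, (-1) ^ Sᶜ.card * ∏ k, ∑ q ∈ S, g k q
      = ∑ S : Finset α, ∑ f ∈ Fintype.piFinset fun _ => S, (-1) ^ Sᶜ.card * ∏ k, g k (f k) :=
        Finset.sum_congr rfl fun S _ => by rw [Finset.prod_univ_sum, Finset.mul_sum]
    _ = ∑ f : α → α, ∑ S with Finset.univ.image f ⊆ S, (-1) ^ Sᶜ.card * ∏ k, g k (f k) :=
        Finset.sum_comm' fun S f => by simp [Finset.image_subset_iff]
    _ = ∑ f : α → α, if f.Surjective then ∏ k, g k (f k) else 0 :=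
        Finset.sum_congr rfl fun f _ => by rw [← Finset.sum_mul, hsign, ite_mul, one_mul, zero_mul]
    _ = ∑ σ : Equiv.Perm α, ∏ k, g k (σ k) := Eq.symm <| by
        refine Fintype.sum_of_injective (fun σ : Equiv.Perm α => ⇑σ) DFunLike.coe_injective _ _
          (fun f hf => if_neg fun hs => hf ?_) fun σ => (if_pos σ.surjective).symm
        exact ⟨Equiv.ofBijective f (Finite.surjective_iff_bijective.1 hs), rfl⟩

end Polarization

section SchurWeyl

variable {α β ι : Type*} [DecidableEq ι]

variable (ι) in
/-- The matrix that permutes the factors of a tensor by `σ`. -/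
def placePerm [Fintype β] (σ : β ≃ α) : Matrix (α → ι) (β → ι) ℂ :=
  Matrix.of fun a b => if a ∘ σ = b then 1 else 0

theorem placePerm_apply [Fintype β] (σ : β ≃ α) (a : α → ι) (b : β → ι) :
    placePerm ι σ a b = if a ∘ σ = b then 1 else 0 := rfl

variable [Fintype α] [DecidableEq α]

theorem tensorPow_mul_placePerm [Fintype ι] (X : Matrix ι ι ℂ) (σ : Equiv.Perm α) :
    tensorPow α X * placePerm ι σ = placePerm ι σ * tensorPow α X := by
  ext a b
  have hσ : ∀ c : α → ι, c ∘ σ = b ↔ c = b ∘ σ.symm := fun c => (Equiv.eq_comp_symm σ c b).symm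
  simp only [Matrix.mul_apply, placePerm_apply, hσ, mul_ite, mul_one, mul_zero,
    Finset.sum_ite_eq', Finset.mem_univ, if_true, ite_mul, one_mul, zero_mul, Finset.sum_ite_eq]
  rw [tensorPow_apply, tensorPow_apply, ← Equiv.prod_comp σ]
  simp

/-- The sum of the simultaneous permutations of the tensor product of the elementary matrices with
row indices `a k` and column indices `b k`. -/
def symSingle (a b : α → ι) : Matrix (α → ι) (α → ι) ℂ :=
  ∑ f : Equiv.Perm α, Matrix.single (a ∘ f) (b ∘ f) 1

theorem symSingle_eq_sum_tensorPow (a b : α → ι) :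
    symSingle a b = ∑ S : Finset α, (-1 : ℂ) ^ Sᶜ.card •
      tensorPow α (∑ q ∈ S, Matrix.single (a q) (b q) 1) := by
  ext c d
  simp only [symSingle, Matrix.sum_apply, Matrix.smul_apply, tensorPow_apply, smul_eq_mul]
  rw [sum_neg_one_pow_mul_prod_sum fun k q => Matrix.single (a q) (b q) (1 : ℂ) (c k) (d k)]
  refine Finset.sum_congr rfl fun f _ => ?_
  simp only [Matrix.single_apply, Finset.prod_ite_zero, Finset.prod_const_one, funext_iff,
    Function.comp_apply, Finset.mem_univ, forall_const, forall_and]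

variable [Fintype ι]

theorem symSingle_mul_comm {T : Matrix (α → ι) (α → ι) ℂ}
    (hT : ∀ X : Matrix ι ι ℂ, tensorPow α X * T = T * tensorPow α X) (a b : α → ι) :
    symSingle a b * T = T * symSingle a b := by
  simp only [symSingle_eq_sum_tensorPow, Finset.sum_mul, Finset.mul_sum, Matrix.smul_mul,
    Matrix.mul_smul, hT]

theorem sum_single_comp (f g : Equiv.Perm α) :
    ∑ a : α → ι, Matrix.single (a ∘ f) (a ∘ g) (1 : ℂ) = placePerm ι (f⁻¹ * g) := by
  ext c d
  have hf : ∀ a : α → ι, a ∘ f = c ↔ a = c ∘ f.symm := fun a => (Equiv.eq_comp_symm f a c).symm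
  simp only [Matrix.sum_apply, Matrix.single_apply, hf, ite_and, Finset.sum_ite_eq',
    Finset.mem_univ, if_true]
  rfl

theorem sum_symSingle_self :
    ∑ a : α → ι, symSingle a a = (Fintype.card (Equiv.Perm α) : ℂ) • 1 := by
  have hone : placePerm ι (1 : Equiv.Perm α) = 1 := rfl
  simp only [symSingle]
  rw [Finset.sum_comm]
  simp only [sum_single_comp, inv_mul_cancel, hone]
  rw [Finset.sum_const, Finset.card_univ, Nat.cast_smul_eq_nsmul]

theorem sum_symSingle_mul_mul_mem (Y : Matrix (α → ι) (α → ι) ℂ) :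
    ∑ a : α → ι, ∑ b : α → ι, symSingle a b * Y * (symSingle a b)ᴴ ∈
      Submodule.span ℂ (Set.range fun σ : Equiv.Perm α => placePerm ι σ) := by
  have hexpand : ∀ a b : α → ι, symSingle a b * Y * (symSingle a b)ᴴ =
      ∑ fg : Equiv.Perm α × Equiv.Perm α,
        Y (b ∘ fg.1) (b ∘ fg.2) • Matrix.single (a ∘ fg.1) (a ∘ fg.2) (1 : ℂ) := fun a b => by
    simp only [symSingle, Matrix.conjTranspose_sum, Matrix.conjTranspose_single, Finset.sum_mul,
      Finset.mul_sum, Matrix.single_mul_mul_single, star_one, one_mul, mul_one]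
    rw [Finset.sum_comm, Fintype.sum_prod_type]
    simp
  have hsum : ∑ a : α → ι, ∑ b : α → ι, symSingle a b * Y * (symSingle a b)ᴴ =
      ∑ fg : Equiv.Perm α × Equiv.Perm α,
        (∑ b : α → ι, Y (b ∘ fg.1) (b ∘ fg.2)) • placePerm ι (fg.1⁻¹ * fg.2) := by
    simp only [hexpand, ← sum_single_comp, Finset.sum_smul, Finset.smul_sum]
    rw [Finset.sum_congr rfl fun a _ => Finset.sum_comm, Finset.sum_comm]
  rw [hsum]
  exact Submodule.sum_mem _ fun fg _ =>
    Submodule.smul_mem _ _ (Submodule.subset_span ⟨fg.1⁻¹ * fg.2, rfl⟩)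

open scoped ComplexOrder in
theorem eq_zero_of_mul_sum_mul_conjTranspose_eq_zero {n : Type*} [Fintype β] [Fintype n]
    {T : Matrix n n ℂ} {S : β → Matrix n n ℂ} (hT : T * ∑ k, S k * (S k)ᴴ = 0) (k : β) :
    T * S k = 0 := by
  have htrace : ∑ k, ((T * S k) * (T * S k)ᴴ).trace = 0 := by
    have h : ∑ k, (T * S k) * (T * S k)ᴴ = T * (∑ k, S k * (S k)ᴴ) * Tᴴ := by
      simp only [Finset.mul_sum, Finset.sum_mul, Matrix.conjTranspose_mul, Matrix.mul_assoc]
    rw [← Matrix.trace_sum, h, hT, zero_mul, Matrix.trace_zero]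
  have hnonneg : ∀ k ∈ Finset.univ, 0 ≤ ((T * S k) * (T * S k)ᴴ).trace := fun k _ =>
    (Matrix.posSemidef_self_mul_conjTranspose _).trace_nonneg
  exact Matrix.trace_mul_conjTranspose_self_eq_zero_iff.1
    ((Finset.sum_eq_zero_iff_of_nonneg hnonneg).1 htrace k (Finset.mem_univ k))

theorem eq_zero_of_mul_sum_symSingle_eq_zero {T : Matrix (α → ι) (α → ι) ℂ}
    (hT : T * ∑ a : α → ι, ∑ b : α → ι, symSingle a b * (symSingle a b)ᴴ = 0) : T = 0 := by
  have hzero : ∀ a b : α → ι, T * symSingle a b = 0 := fun a b => by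
    rw [← Fintype.sum_prod_type'] at hT
    exact eq_zero_of_mul_sum_mul_conjTranspose_eq_zero hT (a, b)
  have hcard : (Fintype.card (Equiv.Perm α) : ℂ) • T = 0 := by
    rw [← Matrix.mul_one T, ← Matrix.mul_smul, ← sum_symSingle_self, Finset.mul_sum]
    exact Finset.sum_eq_zero fun a _ => hzero a a
  exact (smul_eq_zero.1 hcard).resolve_left (Nat.cast_ne_zero.2 Fintype.card_ne_zero)

/-- Schur–Weyl duality. With `C = ∑ S Sᴴ`, the sum being over the `symSingle`s `S`, right
multiplication by `C` is injective, and it maps the commutant into the span of the permutations,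
since `T C = ∑ S T Sᴴ` when `T` is in the commutant; now compare dimensions. -/
theorem mem_span_placePerm_of_commute {T : Matrix (α → ι) (α → ι) ℂ}
    (hT : ∀ X : Matrix ι ι ℂ, tensorPow α X * T = T * tensorPow α X) :
    T ∈ Submodule.span ℂ (Set.range fun σ : Equiv.Perm α => placePerm ι σ) := by
  set 𝒜 := Submodule.span ℂ (Set.range fun σ : Equiv.Perm α => placePerm ι σ)
  set 𝒞 := (Subalgebra.centralizer ℂ (Set.range (tensorPow α : Matrix ι ι ℂ → _))).toSubmodule
  have mem_𝒞 : ∀ T, T ∈ 𝒞 ↔ ∀ X : Matrix ι ι ℂ, tensorPow α X * T = T * tensorPow α X :=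
    fun T => (Subalgebra.mem_centralizer_iff ℂ).trans Set.forall_mem_range
  have hle : 𝒜 ≤ 𝒞 := Submodule.span_le.2 <| Set.range_subset_iff.2 fun σ =>
    (mem_𝒞 _).2 fun X => tensorPow_mul_placePerm X σ
  set C := ∑ a : α → ι, ∑ b : α → ι, symSingle a b * (symSingle a b)ᴴ
  have hmaps : ∀ T ∈ 𝒞, LinearMap.mulRight ℂ C T ∈ 𝒜 := fun T hT => by
    have h := sum_symSingle_mul_mul_mem T
    simp only [symSingle_mul_comm ((mem_𝒞 T).1 hT), Matrix.mul_assoc, ← Finset.mul_sum] at h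
    exact h
  have hinj : Function.Injective ((LinearMap.mulRight ℂ C).restrict hmaps) :=
    (injective_iff_map_eq_zero _).2 fun T hT0 =>
      Subtype.ext (eq_zero_of_mul_sum_symSingle_eq_zero (congrArg Subtype.val hT0))
  rw [Submodule.eq_of_le_of_finrank_le hle (LinearMap.finrank_le_finrank_of_injective hinj)]
  exact (mem_𝒞 T).2 hT

end SchurWeyl

section Intertwiners

variable {α β ι : Type*} [Fintype α] [Fintype β] [Fintype ι] [DecidableEq α] [DecidableEq β]
  {T : Matrix (α → ι) (β → ι) ℂ}

theorem intertwines_of_unitary [DecidableEq ι]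
    (hT : ∀ U ∈ Matrix.unitaryGroup ι ℂ, tensorPow α U * T = T * tensorPow β U)
    (X : Matrix ι ι ℂ) : tensorPow α X * T = T * tensorPow β X := by
  ext a b
  let p : MvPolynomial (ι × ι) ℂ :=
    ∑ c : α → ι, (∏ k, MvPolynomial.X (a k, c k)) * MvPolynomial.C (T c b) -
      ∑ c : β → ι, MvPolynomial.C (T a c) * ∏ k, MvPolynomial.X (c k, b k)
  have hp : ∀ Y : Matrix ι ι ℂ, MvPolynomial.eval (fun ij => Y ij.1 ij.2) p =
      (tensorPow α Y * T) a b - (T * tensorPow β Y) a b := fun Y => by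
    simp [p, Matrix.mul_apply, tensorPow_apply]
  rw [← sub_eq_zero, ← hp]
  exact eval_eq_zero_of_unitary p (fun U hU => by rw [hp, hT U hU, sub_self]) X

/-- The two tensor powers of a scalar matrix are different scalars. -/
theorem eq_zero_of_intertwines_of_card_ne (h : Fintype.card α ≠ Fintype.card β)
    (hT : ∀ X : Matrix ι ι ℂ, tensorPow α X * T = T * tensorPow β X) : T = 0 := by
  classical
  have hscalar := hT ((2 : ℂ) • 1)
  rw [tensorPow_smul_one, tensorPow_smul_one, Matrix.smul_mul, Matrix.mul_smul, Matrix.one_mul,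
    Matrix.mul_one, ← sub_eq_zero, ← sub_smul] at hscalar
  refine (smul_eq_zero.1 hscalar).resolve_left (sub_ne_zero.2 fun hpow => h ?_)
  exact Nat.pow_right_injective le_rfl (by exact_mod_cast hpow)

theorem mem_span_placePerm_of_intertwines_of_equiv [DecidableEq ι] (e : β ≃ α)
    (hT : ∀ X : Matrix ι ι ℂ, tensorPow α X * T = T * tensorPow β X) :
    T ∈ Submodule.span ℂ (Set.range fun σ : β ≃ α => placePerm ι σ) := by
  let E : (β → ι) ≃ (α → ι) := e.arrowCongr (.refl ι)
  let L := Matrix.reindexLinearEquiv ℂ ℂ (.refl (α → ι)) E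
  have hpow : ∀ X : Matrix ι ι ℂ, tensorPow α X = (tensorPow β X).submatrix E.symm E.symm :=
    fun X => by
      ext a b
      rw [Matrix.submatrix_apply, tensorPow_apply, tensorPow_apply, ← e.prod_comp]
      rfl
  have hLT : L T ∈ Submodule.span ℂ (Set.range fun σ : Equiv.Perm α => placePerm ι σ) := by
    refine mem_span_placePerm_of_commute fun X => ?_
    change tensorPow α X * T.submatrix id E.symm = T.submatrix id E.symm * tensorPow α X
    conv_rhs => rw [hpow]
    rw [Matrix.submatrix_mul_equiv, ← hT X]
    rfl
  rw [← L.symm_apply_apply T]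
  refine (Submodule.span_le (p := (Submodule.span ℂ _).comap L.symm.toLinearMap)).2 ?_ hLT
  rintro _ ⟨σ, rfl⟩
  refine Submodule.subset_span ⟨e.trans σ, ?_⟩
  ext a b
  exact if_congr (Equiv.eq_comp_symm e (a ∘ σ) b).symm rfl rfl

theorem mem_span_placePerm_of_unitary [DecidableEq ι]
    (hT : ∀ U ∈ Matrix.unitaryGroup ι ℂ, tensorPow α U * T = T * tensorPow β U) :
    T ∈ Submodule.span ℂ (Set.range fun σ : β ≃ α => placePerm ι σ) := by
  by_cases hcard : Fintype.card α = Fintype.card β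
  · exact mem_span_placePerm_of_intertwines_of_equiv (Fintype.equivOfCardEq hcard.symm)
      (intertwines_of_unitary hT)
  · rw [eq_zero_of_intertwines_of_card_ne hcard (intertwines_of_unitary hT)]
    exact Submodule.zero_mem _

end Intertwiners

section Components

variable {K ι : Type*} (s : K → Bool)

/-- The combination of a multi-index for the standard representation, at the factors with
`s k = true`, with a multi-index for its conjugate, at the other factors. -/
def glue (i : {k // s k = true} → ι) (j : {k // s k = false} → ι) (k : K) : ι ⊕ ι :=
  match h : s k with
  | true => Sum.inl (i ⟨k, h⟩)
  | false => Sum.inr (j ⟨k, h⟩)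

variable {s}

theorem glue_of_true (i : {k // s k = true} → ι) (j : {k // s k = false} → ι)
    (k : {k // s k = true}) : glue s i j k = Sum.inl (i k) := by
  unfold glue
  grind

theorem glue_of_false (i : {k // s k = true} → ι) (j : {k // s k = false} → ι)
    (k : {k // s k = false}) : glue s i j k = Sum.inr (j k) := by
  unfold glue
  grind

theorem isLeft_glue (i : {k // s k = true} → ι) (j : {k // s k = false} → ι) (k : K) :
    (glue s i j k).isLeft = s k := by
  cases h : s k
  · exact congrArg Sum.isLeft (glue_of_false i j ⟨k, h⟩)
  · exact congrArg Sum.isLeft (glue_of_true i j ⟨k, h⟩)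

theorem glue_injective : Function.Injective fun p :
    ({k // s k = true} → ι) × ({k // s k = false} → ι) => glue s p.1 p.2 := by
  rintro ⟨i, j⟩ ⟨i', j'⟩ (h : glue s i j = glue s i' j')
  refine Prod.ext (funext fun k => Sum.inl_injective (β := ι) ?_)
    (funext fun k => Sum.inr_injective (α := ι) ?_)
  · rw [← glue_of_true i j k, h, glue_of_true]
  · rw [← glue_of_false i j k, h, glue_of_false]

theorem exists_eq_glue {a : K → ι ⊕ ι} (ha : ∀ k, (a k).isLeft = s k) :
    ∃ i j, a = glue s i j := by
  refine ⟨fun k => (a k).getLeft ((ha k).trans k.2),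
    fun k => (a k).getRight (by rw [← Sum.not_isLeft, ha k, k.2]; decide),
    funext fun k => ?_⟩
  cases h : s k
  · rw [glue_of_false _ _ ⟨k, h⟩, Sum.inr_getRight]
  · rw [glue_of_true _ _ ⟨k, h⟩, Sum.inl_getLeft]

variable [Fintype K]

theorem tensorPow_dbl_glue (U : Matrix ι ι ℂ) (i i' : {k // s k = true} → ι)
    (j j' : {k // s k = false} → ι) :
    tensorPow K (dbl U) (glue s i j) (glue s i' j') =
      tensorPow _ U i i' * tensorPow _ (U.map (starRingEnd ℂ)) j j' := by
  simp only [tensorPow_apply]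
  rw [← Fintype.prod_fiberwise s, Fintype.prod_bool]
  simp only [glue_of_true, glue_of_false, dbl, Matrix.fromBlocks_apply₁₁,
    Matrix.fromBlocks_apply₂₂]

theorem tensorPow_dbl_glue_eq_zero (U : Matrix ι ι ℂ) (i : {k // s k = true} → ι)
    (j : {k // s k = false} → ι) {a : K → ι ⊕ ι}
    (ha : a ∉ Set.range fun p : ({k // s k = true} → ι) × ({k // s k = false} → ι) =>
      glue s p.1 p.2) : tensorPow K (dbl U) (glue s i j) a = 0 := by
  contrapose! ha with hne
  rw [tensorPow_apply, Finset.prod_ne_zero_iff] at hne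
  have hside : ∀ x y : ι ⊕ ι, dbl U x y ≠ 0 → y.isLeft = x.isLeft := by
    rintro (x | x) (y | y) <;> simp [dbl]
  obtain ⟨i', j', rfl⟩ := exists_eq_glue fun k =>
    (hside _ _ (hne k (Finset.mem_univ k))).trans (isLeft_glue i j k)
  exact ⟨(i', j'), rfl⟩

variable [DecidableEq K] [Fintype ι]

theorem component_eq_of_invariant {v : (K → ι ⊕ ι) → ℂ} {U : Matrix ι ι ℂ}
    (hv : tensorPow K (dbl U) *ᵥ v = v) :
    Matrix.of (fun i j => v (glue s i j)) =
      tensorPow {k // s k = true} U * Matrix.of (fun i j => v (glue s i j)) *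
        (tensorPow {k // s k = false} (U.map (starRingEnd ℂ)))ᵀ := by
  ext i j
  have hij := congrFun hv (glue s i j)
  rw [Matrix.mulVec, dotProduct, ← Fintype.sum_of_injective _ glue_injective
    (fun p => tensorPow K (dbl U) (glue s i j) (glue s p.1 p.2) * v (glue s p.1 p.2)) _
    (fun a ha => by rw [tensorPow_dbl_glue_eq_zero U i j ha, zero_mul]) fun _ => rfl] at hij
  rw [Matrix.of_apply, ← hij, Fintype.sum_prod_type_right]
  simp only [Matrix.mul_apply, tensorPow_dbl_glue, Matrix.transpose_apply, Matrix.of_apply,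
    Finset.sum_mul, mul_right_comm]

theorem component_intertwines [DecidableEq ι] {v : (K → ι ⊕ ι) → ℂ}
    (hv : ∀ U ∈ Matrix.unitaryGroup ι ℂ, tensorPow K (dbl U) *ᵥ v = v) (s : K → Bool)
    {U : Matrix ι ι ℂ} (hU : U ∈ Matrix.unitaryGroup ι ℂ) :
    tensorPow {k // s k = true} U * Matrix.of (fun i j => v (glue s i j)) =
      Matrix.of (fun i j => v (glue s i j)) * tensorPow {k // s k = false} U := by
  have hinv : (tensorPow {k // s k = false} (U.map (starRingEnd ℂ)))ᵀ * tensorPow _ U = 1 := by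
    change tensorPow _ (star U) * tensorPow _ U = 1
    rw [← tensorPow_mul, Matrix.mem_unitaryGroup_iff'.1 hU, ← one_smul ℂ 1, tensorPow_smul_one,
      one_pow, one_smul]
  conv_rhs => rw [component_eq_of_invariant (hv U hU), Matrix.mul_assoc, hinv, Matrix.mul_one]

end Components

section Contraction

variable {K ι : Type*} [DecidableEq ι]

/-- The duality pairing of the standard representation with its conjugate, on basis vectors. -/
def basisPair : ι ⊕ ι → ι ⊕ ι → ℂ
  | Sum.inl i, Sum.inr j => if i = j then 1 else 0
  | _, _ => 0

/-- `signFlip` acts by the two signs on the two summands, so averaging over it isolates the duality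
pairing from the symplectic form. -/
theorem basisPair_eq_sum_symp [Fintype ι] (x y : ι ⊕ ι) : basisPair x y =
    ∑ r : Bool, (bif r then 1 / 2 else -1 / 2) *
      symp ι ℂ (Pi.single x 1) (bif r then signFlip (Pi.single y 1) else Pi.single y 1) := by
  rcases x with i | i <;> rcases y with j | j <;>
    simp [basisPair, symp_apply, signFlip, Pi.single_apply, eq_comm] <;>
    split_ifs <;> norm_num

variable [Fintype K] {s : K → Bool} (σ : {k // s k = false} ≃ {k // s k = true})

/-- The tensor, in coordinates, of the multilinear form that pairs the factors `σ b` and `b`. -/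
def contraction (a : K → ι ⊕ ι) : ℂ :=
  ∏ b, basisPair (a (σ b)) (a b)

theorem contraction_glue (i : {k // s k = true} → ι) (j : {k // s k = false} → ι) :
    contraction σ (glue s i j) = placePerm ι σ i j := by
  rw [contraction, placePerm_apply]
  simp only [glue_of_true, glue_of_false, basisPair, Finset.prod_ite_zero, Finset.prod_const_one,
    funext_iff, Finset.mem_univ, forall_const, Function.comp_apply]

theorem contraction_eq_zero {a : K → ι ⊕ ι} (ha : (fun k => (a k).isLeft) ≠ s) :
    contraction σ a = 0 := by
  contrapose! ha with hne
  rw [contraction, Finset.prod_ne_zero_iff] at hne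
  have hpair : ∀ x y : ι ⊕ ι, basisPair x y ≠ 0 → x.isLeft = true ∧ y.isLeft = false := by
    rintro (x | x) (y | y) <;> simp [basisPair]
  have hside := fun b => hpair _ _ (hne b (Finset.mem_univ b))
  funext k
  cases h : s k
  · exact (hside ⟨k, h⟩).2
  · simpa using (hside (σ.symm ⟨k, h⟩)).1

theorem mem_span_contraction_of_invariant [DecidableEq K] [Fintype ι] {v : (K → ι ⊕ ι) → ℂ}
    (hv : ∀ U ∈ Matrix.unitaryGroup ι ℂ, tensorPow K (dbl U) *ᵥ v = v) :
    v ∈ Submodule.span ℂ (Set.range fun p : Σ s : K → Bool,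
      {k // s k = false} ≃ {k // s k = true} => contraction p.2) := by
  have hcomp := fun s => mem_span_placePerm_of_unitary fun U hU => component_intertwines hv s hU
  simp only [Submodule.mem_span_range_iff_exists_fun] at hcomp
  choose c hc using hcomp
  refine Submodule.mem_span_range_iff_exists_fun ℂ |>.2 ⟨fun p => c p.1 p.2, funext fun a => ?_⟩
  rw [Fintype.sum_sigma, Finset.sum_apply, Finset.sum_eq_single fun k => (a k).isLeft]
  · obtain ⟨i, j, hij⟩ := exists_eq_glue (a := a) fun k => rfl
    have hentry := congrFun (congrFun (hc fun k => (a k).isLeft) i) j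
    rw [Matrix.of_apply, ← hij, Matrix.sum_apply] at hentry
    rw [← hentry, Finset.sum_apply]
    refine Finset.sum_congr rfl fun σ _ => ?_
    rw [Pi.smul_apply, Matrix.smul_apply, ← contraction_glue, ← hij]
  · intro s _ hs
    rw [Finset.sum_apply]
    refine Finset.sum_eq_zero fun σ _ => ?_
    rw [Pi.smul_apply, contraction_eq_zero σ hs.symm, smul_zero]
  · exact fun h => absurd (Finset.mem_univ _) h

end Contraction

section FirstFundamentalTheorem

variable {m : ℕ} {s : Fin m → Bool}

theorem exists_isSymMatching_apply_eq (σ : {k // s k = false} ≃ {k // s k = true})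
    (t : {k // s k = false} → Bool) :
    ∃ M : Equiv.Perm (Fin (2 * m)), IsSymMatching M ∧
      ∀ b, M (mirrorEquiv m (σ b, false)) = mirrorEquiv m (b, t b) := by
  let e : Bool × {k // s k = false} ≃ Fin m :=
    (Equiv.sigmaEquivProd Bool _).symm.trans ((Equiv.sigmaCongrRight fun
      | false => .refl _
      | true => σ).trans (Equiv.sigmaFiberEquiv s))
  let E : (Bool × {k // s k = false}) × Bool ≃ Fin (2 * m) :=
    (e.prodCongr (.refl Bool)).trans (mirrorEquiv m)
  have hErev : ∀ p, (E p).rev = E (p.1, !p.2) := fun p => rev_mirrorEquiv (e p.1, p.2)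
  let f : (Bool × {k // s k = false}) × Bool → (Bool × {k // s k = false}) × Bool :=
    fun p => ((!p.1.1, p.1.2), xor p.2 (t p.1.2))
  have hf : f.Involutive := fun p => by simp [f]
  have hM : ∀ p, E.permCongr hf.toPerm (E p) = E (f p) := fun p => by simp [Equiv.permCongr_apply]
  have hne : ∀ p r, E (f p) ≠ E (p.1, r) := fun p r h =>
    Bool.not_ne_self p.1.1 (congrArg (fun q => q.1.1) (E.injective h))
  refine ⟨E.permCongr hf.toPerm, ⟨E.surjective.forall.2 fun p => ?_,
    E.surjective.forall.2 fun p => ?_, E.surjective.forall.2 fun p => ?_,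
    E.surjective.forall.2 fun p => ?_⟩, fun b => ?_⟩
  · rw [hM, hM, hf]
  · simp only [hErev, hM, f, Bool.not_xor]
  · rw [hM]
    exact hne p p.2
  · rw [hM, hErev]
    exact hne p _
  · exact (hM ((true, b), false)).trans (by simp [E, f, e])

theorem exists_prod_eq_smul_matchProd {R V : Type*} [CommRing R] [AddCommGroup V] [Module R V]
    {B : V →ₗ[R] V →ₗ[R] R} {J : V → V} (hB : B.IsAlt) (hJ : ∀ u v, B (J u) (J v) = B v u)
    (σ : {k // s k = false} ≃ {k // s k = true}) (t : {k // s k = false} → Bool) :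
    ∃ M : Equiv.Perm (Fin (2 * m)), IsSymMatching M ∧ ∃ ε : ℤˣ, ∀ w, IsMirrored J w →
      ∏ b, B (w (mirrorEquiv m (σ b, false))) (w (mirrorEquiv m (b, t b))) =
        ε • matchProd B M w := by
  obtain ⟨M, hM, hMt⟩ := exists_isSymMatching_apply_eq σ t
  have hne : ∀ b b' : {k // s k = false}, (σ b : Fin m) ≠ b' := fun b b' h =>
    absurd (((σ b).2.symm.trans (congrArg s h)).trans b'.2) (by decide)
  simp only [← hMt]
  refine ⟨M, hM, exists_prod_transversal_eq_smul hM hB hJ _ (fun b b' h => ?_) fun x => ?_⟩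
  · simp only [orbMin_eq_orbMin_iff hM, hMt, rev_mirrorEquiv, EmbeddingLike.apply_eq_iff_eq,
      Prod.mk.injEq, hne, false_and, or_false, Bool.not_false, Bool.false_eq_true, and_false,
      and_true] at h
    exact σ.injective (Subtype.ext h)
  · have hflip : ∀ k r r', orbMin M (mirrorEquiv m (k, r)) = orbMin M (mirrorEquiv m (k, r')) := by
      rintro k (_ | _) (_ | _) <;> first | rfl | rw [← orbMin_rev hM, rev_mirrorEquiv]; rfl
    obtain ⟨⟨k, r⟩, rfl⟩ := (mirrorEquiv m).surjective x
    cases h : s k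
    · exact ⟨⟨k, h⟩, by rw [← orbMin_apply hM, hMt]; exact hflip k _ r⟩
    · exact ⟨σ.symm ⟨k, h⟩, by rw [Equiv.apply_symm_apply]; exact hflip k _ r⟩

theorem contraction_mem_span_matchTensor (l : ℕ) (σ : {k // s k = false} ≃ {k // s k = true}) :
    contraction σ ∈ Submodule.span ℂ
      (matchTensor l '' {M : Equiv.Perm (Fin (2 * m)) | IsSymMatching M}) := by
  choose M hM ε hε using
    exists_prod_eq_smul_matchProd (symp_isAlt (ι := Fin l) (R := ℂ)) symp_signFlip σ
  have hsum : contraction σ = ∑ t : {k // s k = false} → Bool,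
      (∏ b, bif t b then (1 / 2 : ℂ) else -1 / 2) • ε t • matchTensor l (M t) := by
    funext a
    rw [Finset.sum_apply, contraction]
    simp only [basisPair_eq_sum_symp, Fintype.prod_sum, Finset.prod_mul_distrib]
    refine Finset.sum_congr rfl fun t _ => congrArg (_ * ·) ?_
    refine Eq.trans (Finset.prod_congr rfl fun b _ => ?_)
      (hε t (mirror signFlip fun k => Pi.single (a k) 1) (isMirrored_mirror signFlip_involutive _))
    rw [mirror_mirrorEquiv_false]
    cases t b
    · rw [mirror_mirrorEquiv_false, cond_false]
    · rw [mirror_mirrorEquiv_true, cond_true]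
  rw [hsum]
  exact Submodule.sum_mem _ fun t _ => Submodule.smul_mem _ _
    (Submodule.smul_of_tower_mem _ (ε t) (Submodule.subset_span ⟨_, hM t, rfl⟩))

theorem mem_span_matchTensor_of_invariant {l : ℕ} {v : (Fin m → Fin l ⊕ Fin l) → ℂ}
    (hv : ∀ U ∈ Matrix.unitaryGroup (Fin l) ℂ, tensorPow (Fin m) (dbl U) *ᵥ v = v) :
    v ∈ Submodule.span ℂ
      (matchTensor l '' {M : Equiv.Perm (Fin (2 * m)) | IsSymMatching M}) := by
  refine Submodule.span_le.2 ?_ (mem_span_contraction_of_invariant hv)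
  rintro _ ⟨⟨s, σ⟩, rfl⟩
  exact contraction_mem_span_matchTensor l σ

end FirstFundamentalTheorem

section HaarAverage

/-- Averaging over the group projects onto the invariants, and the rank of a projection is its
trace. -/
theorem integral_trace_eq_finrank {G I : Type*} [Group G] [MeasurableSpace G] [MeasurableMul G]
    [Fintype I] {μ : Measure G} [μ.IsMulLeftInvariant] [IsProbabilityMeasure μ]
    {R : G → Matrix I I ℂ} (hR : ∀ g h, R (g * h) = R g * R h)
    (hint : ∀ a b, Integrable (fun g => R g a b) μ) {p : Submodule ℂ (I → ℂ)}
    (hp : ∀ v, v ∈ p ↔ ∀ g, R g *ᵥ v = v) :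
    ∫ g, (R g).trace ∂μ = Module.finrank ℂ p := by
  classical
  set P : Matrix I I ℂ := Matrix.of fun a b => ∫ g, R g a b ∂μ with hP
  have hRP : ∀ g, R g * P = P := fun g => by
    ext a b
    simp only [Matrix.mul_apply, hP, Matrix.of_apply]
    rw [← integral_mul_left_eq_self (fun h => R h a b) g]
    simp only [hR, Matrix.mul_apply, ← integral_const_mul]
    exact (integral_finsetSum _ fun c _ => (hint c b).const_mul _).symm
  have hproj : LinearMap.IsProj p (Matrix.toLin' P) := by
    refine ⟨fun v => (hp _).2 fun g => ?_, fun v hv => funext fun a => ?_⟩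
    · rw [Matrix.toLin'_apply, Matrix.mulVec_mulVec, hRP]
    · calc Matrix.toLin' P v a = ∑ c, ∫ g, R g a c * v c ∂μ := by
            simp only [Matrix.toLin'_apply, Matrix.mulVec, dotProduct, hP, Matrix.of_apply,
              integral_mul_const]
        _ = ∫ g, (R g *ᵥ v) a ∂μ :=
            (integral_finsetSum _ fun c _ => (hint a c).mul_const _).symm
        _ = v a := by simp only [(hp v).1 hv, integral_const, probReal_univ, one_smul]
  rw [← hproj.trace, Matrix.trace_toLin'_eq]
  exact integral_finsetSum _ fun a _ => hint a a

theorem continuous_dbl {ι : Type*} : Continuous (dbl : Matrix ι ι ℂ → _) :=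
  continuous_id.matrix_fromBlocks continuous_const continuous_const
    (continuous_id.matrix_map Complex.continuous_conj)

theorem norm_dbl_apply_le_one {ι : Type*} [Fintype ι] [DecidableEq ι] {U : Matrix ι ι ℂ}
    (hU : U ∈ Matrix.unitaryGroup ι ℂ) (x y : ι ⊕ ι) : ‖dbl U x y‖ ≤ 1 := by
  rcases x with i | i <;> rcases y with j | j <;> simp [dbl, entry_norm_bound_of_unitary hU]

theorem integrable_tensorPow_dbl {K : Type*} [Fintype K] {l : ℕ}
    (μ : Measure (Matrix.unitaryGroup (Fin l) ℂ)) [IsFiniteMeasure μ]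
    (a b : K → Fin l ⊕ Fin l) :
    Integrable (fun U : Matrix.unitaryGroup (Fin l) ℂ => tensorPow K (dbl U.1) a b) μ := by
  simp only [tensorPow_apply]
  refine Integrable.of_bound (C := 1) (Continuous.aestronglyMeasurable ?_)
    (Filter.Eventually.of_forall fun U => ?_)
  · exact continuous_finsetProd _ fun k _ =>
      (continuous_dbl.comp continuous_subtype_val).matrix_elem (a k) (b k)
  · rw [norm_prod]
    exact Finset.prod_le_one (fun _ _ => norm_nonneg _) fun k _ => norm_dbl_apply_le_one U.2 _ _

end HaarAverage

section Counting

theorem mem_span_matchTensor_iff {m l : ℕ} (v : (Fin m → Fin l ⊕ Fin l) → ℂ) :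
    v ∈ Submodule.span ℂ (Set.range fun M : {M : Equiv.Perm (Fin (2 * m)) |
        IsSymMatching M ∧ lisLE (Fin.revPerm * M) (2 * l)} => matchTensor l M.1) ↔
      ∀ U : Matrix.unitaryGroup (Fin l) ℂ, tensorPow (Fin m) (dbl U.1) *ᵥ v = v := by
  refine ⟨fun hv U => ?_, fun hv => ?_⟩
  · induction hv using Submodule.span_induction with
    | mem v hv =>
      obtain ⟨M, rfl⟩ := hv
      exact tensorPow_dbl_mulVec_matchTensor M.2.1 U.2
    | zero => exact Matrix.mulVec_zero _
    | add v w _ _ hv hw => rw [Matrix.mulVec_add, hv, hw]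
    | smul c v _ hv => rw [Matrix.mulVec_smul, hv]
  · refine Submodule.span_le.2 ?_ (mem_span_matchTensor_of_invariant fun U hU => hv ⟨U, hU⟩)
    rintro _ ⟨M, hM, rfl⟩
    have hdim : Module.finrank ℂ (Fin l ⊕ Fin l → ℂ) ≤ 2 * l := by simp [two_mul]
    rw [← Set.image_eq_range]
    exact matchVec_mem_span_of_lisLE hdim symp_isAlt symp_signFlip
      (fun _ => isMirrored_mirror signFlip_involutive _) hM

theorem isSymMatching_revPerm_mul_iff {N : ℕ} (π : Equiv.Perm (Fin N)) :
    IsSymMatching (Fin.revPerm * π) ↔ π = π⁻¹ ∧ π = Fin.revPerm * π⁻¹ * Fin.revPerm ∧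
      (∀ x, π x ≠ x) ∧ ∀ x, π x ≠ Fin.revPerm x := by
  have happly : ∀ x, (Fin.revPerm * π : Equiv.Perm (Fin N)) x = (π x).rev := fun _ => rfl
  constructor
  · intro hM
    have hrev : ∀ x, π x.rev = (π x).rev := fun x => by
      simpa only [happly, Fin.rev_inj] using hM.apply_rev x
    have hinv : ∀ x, π (π x) = x := fun x => by
      simpa only [happly, hrev, Fin.rev_rev] using hM.involutive x
    have hself : π = π⁻¹ := eq_inv_of_mul_eq_one_left (Equiv.ext hinv)
    refine ⟨hself, ?_, fun x hx => hM.ne_rev x (congrArg Fin.rev hx), fun x hx => hM.ne_self x ?_⟩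
    · rw [← hself]
      exact Equiv.ext fun x => by simp [hrev]
    · rw [happly, hx, Fin.revPerm_apply, Fin.rev_rev]
  · rintro ⟨hself, hsymm, hne, hne_rev⟩
    have hinv : ∀ x, π (π x) = x := fun x => by
      nth_rewrite 1 [hself]
      exact π.symm_apply_apply x
    have hrev : ∀ x, π x.rev = (π x).rev := fun x => by
      conv_lhs => rw [hsymm, ← hself]
      simp
    refine ⟨fun x => ?_, fun x => ?_, fun x hx => hne_rev x (Fin.rev_eq_iff.1 hx), fun x hx =>
      hne x (Fin.rev_injective hx)⟩
    · rw [happly, happly, hrev, hinv, Fin.rev_rev]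
    · rw [happly, happly, hrev]

theorem fuCount_eq_card (n l : ℕ) : fuCount n l =
    Nat.card {M : Equiv.Perm (Fin (2 * (2 * n))) |
      IsSymMatching M ∧ lisLE (Fin.revPerm * M) l} := by
  rw [fuCount, show 4 * n = 2 * (2 * n) by ring]
  refine Nat.card_congr (Equiv.subtypeEquiv (Equiv.mulLeft Fin.revPerm) fun π => ?_)
  have hπ : Fin.revPerm * (Fin.revPerm * π) = π := Equiv.ext fun x => Fin.rev_rev _
  rw [Equiv.coe_mulLeft, Set.mem_ofPred_eq, isSymMatching_revPerm_mul_iff, hπ, and_assoc, and_assoc,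
    and_assoc]

end Counting

/-- `f^u_{n,2l} = E_{U ∈ U(l)} (Tr U + conj(Tr U))^{2n}`, the `2n`-th moment of twice
the real part of the trace of a Haar-random `l×l` unitary matrix. -/
theorem fuCount_eq_unitary_real_trace_moment (n l : ℕ)
    (μ : Measure (Matrix.unitaryGroup (Fin l) ℂ))
    [μ.IsHaarMeasure] [IsProbabilityMeasure μ] :
    (fuCount n (2 * l) : ℂ) =
      ∫ U, (Matrix.trace (U : Matrix (Fin l) (Fin l) ℂ) +
        (starRingEnd ℂ) (Matrix.trace (U : Matrix (Fin l) (Fin l) ℂ))) ^ (2 * n) ∂μ := by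
  classical
  have htrace : ∀ U : Matrix.unitaryGroup (Fin l) ℂ,
      (tensorPow (Fin (2 * n)) (dbl U.1)).trace =
        (U.1.trace + starRingEnd ℂ U.1.trace) ^ (2 * n) := fun U => by
    rw [trace_tensorPow, trace_dbl, Fintype.card_fin]
  have hdim := integral_trace_eq_finrank (μ := μ)
    (R := fun U => tensorPow (Fin (2 * n)) (dbl U.1))
    (fun U V => by rw [Submonoid.coe_mul, dbl_mul, tensorPow_mul])
    (integrable_tensorPow_dbl μ) mem_span_matchTensor_iff
  simp only [htrace] at hdim
  rw [hdim, finrank_span_eq_card (linearIndependent_matchTensor (2 * n) l), fuCount_eq_card,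
    Nat.card_eq_fintype_card]
end
end
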